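/- For every natural number n, the number of permutations of length n avoiding all three of the patterns 2143, 3142, and 246135 equals the number of permutations of length n avoiding both of the patterns 2413 and 3142. In other words, the set of patterns {2143, 3142, 246135} is Wilf-equivalent to the set of patterns {2413, 3142}. -/

import Mathlib

/-- `π` contains the pattern `σ`: there is a strictly increasing choice of positions
on which `π` is order-isomorphic to `σ`. -/
def Contains {n k : ℕ} (π : Equiv.Perm (Fin n)) (σ : Equiv.Perm (Fin k)) : Prop :=
  ∃ f : Fin k → Fin n, StrictMono f ∧ ∀ a b : Fin k, σ a < σ b ↔ π (f a) < π (f b)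

/-- `π` avoids the pattern `σ`. -/
def Avoids {n k : ℕ} (π : Equiv.Perm (Fin n)) (σ : Equiv.Perm (Fin k)) : Prop :=
  ¬ Contains π σ
noncomputable def p2143 : Equiv.Perm (Fin 4) := Equiv.ofBijective ![1, 0, 3, 2] (by decide)
noncomputable def p3142 : Equiv.Perm (Fin 4) := Equiv.ofBijective ![2, 0, 3, 1] (by decide)
noncomputable def p246135 : Equiv.Perm (Fin 6) := Equiv.ofBijective ![1, 3, 5, 0, 2, 4] (by decide)
noncomputable def p2413 : Equiv.Perm (Fin 4) := Equiv.ofBijective ![1, 3, 0, 2] (by decide)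


namespace WilfProof

/-- `a` occurs before `b` in `l`. -/
def Bef (l : List ℕ) (a b : ℕ) : Prop := [a, b].Sublist l

theorem bef_append (X Y : List ℕ) (a b : ℕ) :
    Bef (X ++ Y) a b ↔ Bef X a b ∨ Bef Y a b ∨ (a ∈ X ∧ b ∈ Y) := by
  unfold Bef
  constructor
  · intro h
    obtain ⟨l1, l2, h, h1, h2⟩ := List.sublist_append_iff.1 h
    rcases l1 with _ | ⟨x, _ | ⟨y, _ | ⟨z, l1⟩⟩⟩
    · simp at h; subst h; exact Or.inr (Or.inl h2)
    · simp at h; obtain ⟨rfl, rfl⟩ := h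
      exact Or.inr (Or.inr ⟨by simpa using h1, by simpa using h2⟩)
    · simp at h; obtain ⟨rfl, rfl, rfl⟩ := h; exact Or.inl h1
    · simp at h
  · rintro (h | h | ⟨h1, h2⟩)
    · exact h.trans (List.sublist_append_left _ _)
    · exact h.trans (List.sublist_append_right _ _)
    · exact (List.singleton_sublist.2 h1).append (List.singleton_sublist.2 h2)

theorem bef_nil (a b : ℕ) : ¬ Bef [] a b := by simp [Bef]

theorem bef_single (x a b : ℕ) : ¬ Bef [x] a b := by
  intro h; have := h.length_le; simp at this

theorem bef_cons (x : ℕ) (Y : List ℕ) (a b : ℕ) :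
    Bef (x :: Y) a b ↔ Bef Y a b ∨ (a = x ∧ b ∈ Y) := by
  have := bef_append [x] Y a b
  simp only [List.singleton_append, bef_single, false_or, List.mem_singleton] at this
  exact this

theorem Bef.left {l : List ℕ} {a b : ℕ} (h : Bef l a b) : a ∈ l := h.subset (by simp)
theorem Bef.right {l : List ℕ} {a b : ℕ} (h : Bef l a b) : b ∈ l := h.subset (by simp)

theorem Bef.mono {l l' : List ℕ} {a b : ℕ} (h : Bef l a b) (hs : l.Sublist l') : Bef l' a b :=
  h.trans hs

theorem bef_map (l : List ℕ) (s a b : ℕ) :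
    Bef (l.map (· + s)) a b ↔ ∃ a' b', a = a' + s ∧ b = b' + s ∧ Bef l a' b' := by
  induction l with
  | nil => simp [bef_nil]
  | cons x l ih =>
    simp only [List.map_cons, bef_cons, ih, List.mem_map]
    constructor
    · rintro (⟨a', b', rfl, rfl, h⟩ | ⟨rfl, b', h, rfl⟩)
      · exact ⟨a', b', rfl, rfl, Or.inl h⟩
      · exact ⟨x, b', rfl, rfl, Or.inr ⟨rfl, h⟩⟩
    · rintro ⟨a', b', rfl, rfl, h | ⟨rfl, h⟩⟩
      · exact Or.inl ⟨a', b', rfl, rfl, h⟩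
      · exact Or.inr ⟨rfl, b', h, rfl⟩

theorem bef_reverse (l : List ℕ) (a b : ℕ) : Bef l.reverse a b ↔ Bef l b a := by
  unfold Bef
  rw [← List.reverse_sublist, List.reverse_reverse]; simp

/-- Avoidance of 2143 and 3142 (combined). -/
def A4 (l : List ℕ) : Prop :=
  ∀ a b c d, Bef l a b → Bef l b c → Bef l c d → b < a → b < d → a < c → d < c → False

/-- Avoidance of 246135. -/
def A6 (l : List ℕ) : Prop :=
  ∀ a b c d e f, Bef l a b → Bef l b c → Bef l c d → Bef l d e → Bef l e f →
    d < a → a < e → e < b → b < f → f < c → False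

def PA (l : List ℕ) : Prop := A4 l ∧ A6 l

/-- everything in `X` is above everything in `Y` -/
def Abv (X Y : List ℕ) : Prop := ∀ x ∈ X, ∀ y ∈ Y, y < x

/-- skew-indecomposable and nonempty -/
def SI (l : List ℕ) : Prop := l ≠ [] ∧ ∀ X Y, l = X ++ Y → X ≠ [] → Y ≠ [] → ¬ Abv X Y

/-- increasing -/
abbrev Inc (l : List ℕ) : Prop := l.Pairwise (· < ·)

theorem Inc.bef {l : List ℕ} (h : Inc l) {a b : ℕ} (hb : Bef l a b) : a < b := by
  have := h.sublist hb
  simpa using this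

def IV (J C : List ℕ) : Prop :=
  ∀ a ∈ J, ∀ b ∈ J, ∀ c d e, Bef C c d → Bef C d e → c < a → a < d → d < b → b < e → False

def SV (J C : List ℕ) : Prop :=
  ∀ a ∈ J, ∀ b ∈ J, ∀ c d, Bef C c d → c < a → a < d → d < b → False

theorem PA.mono {l l' : List ℕ} (h : PA l) (hs : l'.Sublist l) : PA l' :=
  ⟨fun a b c d h1 h2 h3 => h.1 a b c d (h1.mono hs) (h2.mono hs) (h3.mono hs),
   fun a b c d e f h1 h2 h3 h4 h5 => h.2 a b c d e f (h1.mono hs) (h2.mono hs) (h3.mono hs)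
     (h4.mono hs) (h5.mono hs)⟩

theorem PA.skew {X Y : List ℕ} (hX : PA X) (hY : PA Y) (h : Abv X Y) : PA (X ++ Y) := by
  unfold Abv at h
  constructor
  · intro a b c d h1 h2 h3 g1 g2 g3 g4
    simp only [bef_append] at h1 h2 h3
    have := hX.1 a b c d
    have := hY.1 a b c d
    grind [Bef.left, Bef.right]
  · intro a b c d e f h1 h2 h3 h4 h5 g1 g2 g3 g4 g5
    simp only [bef_append] at h1 h2 h3 h4 h5
    have := hX.2 a b c d e f
    have := hY.2 a b c d e f
    grind [Bef.left, Bef.right]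

/-- the core of type (iii) -/
theorem iii_back {J I P C : List ℕ} (hJI : Inc (J ++ I)) (hA : PA (J ++ I ++ C)) (hP : PA P)
    (hiv : IV (J ++ I) C) (hdis : ∀ x ∈ J ++ I, x ∉ C) (habv : Abv P (J ++ I ++ C)) :
    PA (J ++ (I ++ P ++ C)) ∧ IV J (I ++ P ++ C) := by
  unfold Abv at habv
  have hb : ∀ {a b}, Bef (J ++ I) a b → a < b := fun h => hJI.bef h
  refine ⟨⟨?_, ?_⟩, ?_⟩
  · intro a b c d h1 h2 h3 g1 g2 g3 g4
    have eq : J ++ (I ++ P ++ C) = (J ++ I) ++ P ++ C := by simp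
    rw [eq] at h1 h2 h3
    have k1 := hP.1 a b c d
    have k2 := hA.1 a b c d
    clear eq
    generalize J ++ I = K at *
    simp only [bef_append, List.mem_append] at *
    grind [Bef.left, Bef.right]
  · intro a b c d e f h1 h2 h3 h4 h5 g1 g2 g3 g4 g5
    have eq : J ++ (I ++ P ++ C) = (J ++ I) ++ P ++ C := by simp
    rw [eq] at h1 h2 h3 h4 h5
    have k1 := hP.2 a b c d e f
    have k2 := hA.2 a b c d e f
    have k3 : a ∈ J ++ I → b ∈ J ++ I → _ := fun ha hb => hiv a ha b hb d e f
    clear eq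
    generalize J ++ I = K at *
    simp only [bef_append, List.mem_append] at *
    grind [Bef.left, Bef.right]
  · intro a ha b hb c d e h1 h2 g1 g2 g3 g4
    have k3 := hiv a (by simp [ha]) b (by simp [hb]) c d e
    have := (List.pairwise_append.1 hJI).2.2
    simp only [bef_append, List.mem_append] at *
    grind [Bef.left, Bef.right]

end WilfProof

namespace WilfProof

theorem abv_append_left {X X' Y : List ℕ} : Abv (X ++ X') Y ↔ Abv X Y ∧ Abv X' Y := by
  unfold Abv; simp only [List.mem_append]
  exact ⟨fun h => ⟨fun x hx => h x (Or.inl hx), fun x hx => h x (Or.inr hx)⟩,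
    fun h x hx => hx.elim (h.1 x) (h.2 x)⟩

theorem abv_append_right {X Y Y' : List ℕ} : Abv X (Y ++ Y') ↔ Abv X Y ∧ Abv X Y' := by
  unfold Abv; simp only [List.mem_append]
  exact ⟨fun h => ⟨fun x hx y hy => h x hx y (Or.inl hy), fun x hx y hy => h x hx y (Or.inr hy)⟩,
    fun h x hx y hy => hy.elim (h.1 x hx y) (h.2 x hx y)⟩

theorem last_comp (l : List ℕ) (hl : l ≠ []) : ∃ X C, l = X ++ C ∧ Abv X C ∧ SI C := by
  induction hn : l.length using Nat.strong_induction_on generalizing l with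
  | _ n ih =>
    by_cases hs : SI l
    · exact ⟨[], l, rfl, by simp [Abv], hs⟩
    · simp only [SI, hl, ne_eq, not_false_eq_true, true_and, not_forall, not_not] at hs
      obtain ⟨X, Y, rfl, hX, hY, hab⟩ := hs
      have hXl : 0 < X.length := List.length_pos_iff.2 hX
      obtain ⟨X', C, rfl, h1, h2⟩ := ih Y.length (by simp at hn; omega) Y hY rfl
      refine ⟨X ++ X', C, by simp, ?_, h2⟩
      simp only [abv_append_left, abv_append_right] at *
      tauto

theorem append_eq_cases {X C X' C' : List ℕ} (h : X ++ C = X' ++ C') :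
    (∃ Z, C = Z ++ C' ∧ X' = X ++ Z) ∨ (∃ Z, C' = Z ++ C ∧ X = X' ++ Z) := by
  rcases List.append_eq_append_iff.1 h with ⟨Z, h1, h2⟩ | ⟨Z, h1, h2⟩
  · exact Or.inl ⟨Z, h2, h1⟩
  · exact Or.inr ⟨Z, h2, h1⟩

theorem last_comp_unique {X C X' C' : List ℕ} (h : X ++ C = X' ++ C') (h1 : Abv X C)
    (h1' : Abv X' C') (h2 : SI C) (h2' : SI C') : X = X' ∧ C = C' := by
  have key : ∀ {X C X' C' : List ℕ}, Abv X' C' → SI C → SI C' → 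
      (∃ Z, C = Z ++ C' ∧ X' = X ++ Z) → X = X' ∧ C = C' := by
    rintro X C X' C' h1' h2 h2' ⟨Z, rfl, rfl⟩
    by_cases hZ : Z = []
    · simp [hZ]
    · refine absurd ?_ (h2.2 Z C' rfl hZ h2'.1)
      simp only [abv_append_left, abv_append_right] at *
      tauto
  rcases append_eq_cases h with h | h
  · exact key h1' h2 h2' h
  · have := key h1 h2' h2 h
    exact ⟨this.1.symm, this.2.symm⟩

theorem comp_of_bef (L : List ℕ) (c d : ℕ) (hb : Bef L c d) (hcd : c < d) :
    ∃ B0 C B1, L = B0 ++ C ++ B1 ∧ Abv B0 C ∧ Abv C B1 ∧ Abv B0 B1 ∧ SI C ∧ c ∈ C ∧ d ∈ C := by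
  induction hn : L.length using Nat.strong_induction_on generalizing L with
  | _ n ih =>
    by_cases hs : SI L
    · exact ⟨[], L, [], by simp, by simp [Abv], by simp [Abv], by simp [Abv], hs, hb.left, hb.right⟩
    · have hl : L ≠ [] := by rintro rfl; exact bef_nil _ _ hb
      simp only [SI, hl, ne_eq, not_false_eq_true, true_and, not_forall, not_not] at hs
      obtain ⟨X, Y, rfl, hX, hY, hab⟩ := hs
      have hXl : 0 < X.length := List.length_pos_iff.2 hX
      have hYl : 0 < Y.length := List.length_pos_iff.2 hY
      rw [bef_append] at hb
      rcases hb with hb | hb | ⟨h1, h2⟩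
      · obtain ⟨B0, C, B1, rfl, a1, a2, a3, a4, a5, a6⟩ := ih X.length (by rw [List.length_append] at hn; omega) X hb rfl
        refine ⟨B0, C, B1 ++ Y, by simp, a1, ?_, ?_, a4, a5, a6⟩ <;> simp only [abv_append_left, abv_append_right] at * <;> tauto
      · obtain ⟨B0, C, B1, rfl, a1, a2, a3, a4, a5, a6⟩ := ih Y.length (by rw [List.length_append] at hn; omega) Y hb rfl
        refine ⟨X ++ B0, C, B1, by simp, ?_, a2, ?_, a4, a5, a6⟩ <;> simp only [abv_append_left, abv_append_right] at * <;> tauto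
      · have := hab c h1 d h2; omega

theorem exists_max (l : List ℕ) (hl : l ≠ []) : ∃ m ∈ l, ∀ x ∈ l, x ≤ m := by
  obtain ⟨m, hm, h⟩ := l.toFinset.exists_max_image id (by simpa using hl)
  exact ⟨m, by simpa using hm, fun x hx => h x (by simpa using hx)⟩

theorem exists_min (l : List ℕ) (hl : l ≠ []) : ∃ m ∈ l, ∀ x ∈ l, m ≤ x := by
  obtain ⟨m, hm, h⟩ := l.toFinset.exists_min_image id (by simpa using hl)
  exact ⟨m, by simpa using hm, fun x hx => h x (by simpa using hx)⟩

def EV (J C : List ℕ) : Prop :=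
  Inc J ∧ SI C ∧ PA (J ++ C) ∧ IV J C ∧ ∀ a ∈ J, ∃ m ∈ C, a < m

def VP (J L : List ℕ) : Prop := Inc J ∧ PA (J ++ L) ∧ SV J L

theorem inc_append {J I : List ℕ} : Inc (J ++ I) ↔ Inc J ∧ Inc I ∧ ∀ a ∈ J, ∀ b ∈ I, a < b :=
  List.pairwise_append

/-- Splitting of a prefix of small elements. -/
theorem prefix_split (M : ℕ) (S : List ℕ)
    (h : ∀ a b, Bef S a b → b < M → a < b) :
    ∃ I S', S = I ++ S' ∧ Inc I ∧ (∀ a ∈ I, a < M) ∧ (∀ a ∈ S', M ≤ a) := by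
  induction S with
  | nil => exact ⟨[], [], by simp⟩
  | cons x S ih =>
    by_cases hx : x < M
    · obtain ⟨I, S', rfl, h1, h2, h3⟩ := ih (fun a b hb => h a b (by simp [bef_cons, hb]))
      refine ⟨x :: I, S', by simp, ?_, by grind, h3⟩
      rw [Inc, List.pairwise_cons]
      refine ⟨fun y hy => h x y ?_ (h2 y hy), h1⟩
      simp [bef_cons, hy]
    · refine ⟨[], x :: S, by simp, by simp, by simp, ?_⟩
      intro a ha
      by_contra hlt
      rcases List.mem_cons.1 ha with rfl | ha
      · omega
      · have := h x a (by simp [bef_cons, ha]) (by omega)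
        omega

theorem iii_exists {J C : List ℕ} (h : EV J C) (hnd : (J ++ C).Nodup)
    (hlast : ¬ ∃ L M, C = L ++ [M] ∧ ∀ x ∈ L, x < M) :
    ∃ I P C', C = I ++ P ++ C' ∧ I ≠ [] ∧ P ≠ [] ∧ Abv P (J ++ I ++ C') ∧ EV (J ++ I) C' ∧ PA P := by
  obtain ⟨hJ, hSI, hPA, hIV, hmax⟩ := h
  obtain ⟨n, hn, hnm⟩ := exists_max C hSI.1
  obtain ⟨S, R, rfl⟩ := List.append_of_mem hn
  have hlt : ∀ x ∈ S ++ R, x < n := by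
    intro x hx
    have h1 : x ≤ n := hnm x (by grind)
    have h2 : x ≠ n := by
      have := (List.nodup_append.1 hnd).2.1
      grind
    omega
  have hR : R ≠ [] := by
    rintro rfl
    exact hlast ⟨S, n, rfl, by simpa using hlt⟩
  obtain ⟨R', C', rfl, hab, hSI'⟩ := last_comp R hR
  obtain ⟨M, hM, hMm⟩ := exists_max C' hSI'.1
  have hdes : ∀ a b, Bef (J ++ S) a b → b < M → a < b := by
    intro a b hb hbM
    by_contra hba
    have hne : a ≠ b := by
      rintro rfl
      have := hb.trans (show (J ++ S).Sublist (J ++ (S ++ n :: (R' ++ C'))) by simp)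
      have := List.Nodup.sublist this hnd
      simp at this
    have han : a < n := by
      have := hb.left
      rcases List.mem_append.1 this with h | h
      · obtain ⟨m, hm, h⟩ := hmax a h
        have := hnm m hm; omega
      · exact hlt a (by simp [h])
    refine hPA.1 a b n M ?_ ?_ ?_ (by omega) hbM han (hlt M (by simp [hM]))
    · exact hb.mono (by simp)
    · have := hb.right
      simp only [bef_append, bef_cons, List.mem_append, List.mem_cons] at *
      grind
    · simp [bef_append, bef_cons, hM]
  obtain ⟨I, S', rfl, hI, hI1, hI2⟩ := prefix_split M S
    (fun a b hb => hdes a b (hb.mono (by simp)))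
  have hJI : ∀ a ∈ J, ∀ b ∈ I, a < b := by
    intro a ha b hb
    exact hdes a b (by simp [bef_append, ha, hb]) (hI1 b hb)
  have hI0 : I ≠ [] := by
    rintro rfl
    refine hSI.2 (S' ++ n :: R') C' (by simp) (by simp) hSI'.1 ?_
    intro x hx y hy
    have h1 := hMm y hy
    have hnd2 := (List.nodup_append.1 hnd).2.1
    have h3 := hab
    unfold Abv at h3
    have h4 := hlt y (by simp [hy])
    have h5 : x ∈ S' → x ≠ M := by
      rintro hx rfl
      simp [List.nodup_append] at hnd2
      grind
    grind
  obtain ⟨i0, hi0⟩ := List.exists_mem_of_ne_nil I hI0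
  have hJM : ∀ a ∈ J ++ I, a < M := by
    intro a ha
    rcases List.mem_append.1 ha with ha | ha
    · exact (hJI a ha i0 hi0).trans (hI1 i0 hi0)
    · exact hI1 a ha
  have hPM : ∀ x ∈ S' ++ n :: R', M < x := by
    intro x hx
    have hnd2 := (List.nodup_append.1 hnd).2.1
    have h3 := hab
    unfold Abv at h3
    have h4 := hlt M (by simp [hM])
    have h5 : x ∈ S' → x ≠ M := by
      rintro hx rfl
      simp [List.nodup_append] at hnd2
      grind
    grind
  refine ⟨I, S' ++ n :: R', C', by simp, hI0, by simp, ?_, ⟨inc_append.2 ⟨hJ, hI, hJI⟩, hSI', ?_, ?_, ?_⟩, ?_⟩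
  · intro x hx y hy
    have := hPM x hx
    rcases List.mem_append.1 hy with hy | hy
    · have := hJM y hy; omega
    · have := hMm y hy; omega
  · refine hPA.mono ?_
    have : (I ++ S' ++ n :: (R' ++ C')) = I ++ ((S' ++ n :: R') ++ C') := by simp
    rw [this, List.append_assoc]
    exact (List.Sublist.refl J).append ((List.Sublist.refl I).append (List.sublist_append_right _ _))
  · intro a ha b hb c d e h1 h2 g1 g2 g3 g4
    by_cases hbI : b ∈ I
    · have hab : Bef (J ++ I) a b := by
        have : a < b := by omega
        have := hI
        rcases List.mem_append.1 ha with ha | ha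
        · simp [bef_append, ha, hbI]
        · rw [bef_append]
          right; left
          obtain ⟨U, V, rfl⟩ := List.append_of_mem ha
          simp only [inc_append, Inc, List.pairwise_cons, List.mem_append, List.mem_cons] at *
          simp only [bef_append, bef_cons]
          grind
      have hen : e < n := hlt e (by simp [h2.right])
      refine hPA.2 a b n c d e (hab.mono (by simp)) ?_ ?_ (h1.mono ?_) (h2.mono ?_) g1 g2 g3 g4 hen
      · simp [bef_append, bef_cons, hbI]
      · simp [bef_append, bef_cons, h1.left]
      · have : J ++ (I ++ S' ++ n :: (R' ++ C')) = (J ++ I ++ S' ++ n :: R') ++ C' := by simp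
        rw [this]; exact List.sublist_append_right _ _
      · have : J ++ (I ++ S' ++ n :: (R' ++ C')) = (J ++ I ++ S' ++ n :: R') ++ C' := by simp
        rw [this]; exact List.sublist_append_right _ _
    · have hbJ : b ∈ J := by grind
      have haJ : a ∈ J := by
        rcases List.mem_append.1 ha with h | h
        · exact h
        · have := hJI b hbJ a h; omega
      have hs : C'.Sublist (I ++ S' ++ n :: (R' ++ C')) := by
        have : (I ++ S' ++ n :: (R' ++ C')) = (I ++ S' ++ n :: R') ++ C' := by simp
        rw [this]; exact List.sublist_append_right _ _
      exact hIV a haJ b hbJ c d e (h1.mono hs) (h2.mono hs) g1 g2 g3 g4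
  · intro a ha; exact ⟨M, hM, hJM a ha⟩
  · refine hPA.mono ?_
    have : J ++ (I ++ S' ++ n :: (R' ++ C')) = (J ++ I) ++ ((S' ++ n :: R') ++ C') := by simp
    rw [this]
    exact (List.sublist_append_left _ _).trans (List.sublist_append_right _ _)

theorem iii_mk {J I P C : List ℕ} (hE : EV (J ++ I) C) (hP : PA P) (hI0 : I ≠ []) (hP0 : P ≠ [])
    (hdis : ∀ x ∈ J ++ I, x ∉ C) (habv : Abv P (J ++ I ++ C)) :
    EV J (I ++ P ++ C) ∧ ¬ ∃ L M, I ++ P ++ C = L ++ [M] ∧ ∀ x ∈ L, x < M := by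
  obtain ⟨hJ, hSI, hPA, hIV, hmax⟩ := hE
  obtain ⟨h1, h2⟩ := iii_back hJ hPA hP hIV hdis habv
  obtain ⟨p, hp⟩ := List.exists_mem_of_ne_nil P hP0
  refine ⟨⟨(inc_append.1 hJ).1, ⟨by simp [hI0], ?_⟩, h1, h2, ?_⟩, ?_⟩
  · intro X Y hXY hX hY hab
    obtain ⟨i0, I', rfl⟩ := List.exists_cons_of_ne_nil hI0
    have hX0 : i0 ∈ X := by
      obtain ⟨x, X', rfl⟩ := List.exists_cons_of_ne_nil hX
      simp at hXY; simp [hXY.1]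
    obtain ⟨m, hm, him⟩ := hmax i0 (by simp)
    rcases append_eq_cases hXY with ⟨Z, rfl, rfl⟩ | ⟨Z, rfl, hZ⟩
    · by_cases hZ : Z = []
      · subst hZ
        have := hab i0 hX0 m (by simpa using hm)
        omega
      · refine hSI.2 Z Y rfl hZ hY ?_
        simp only [abv_append_left, abv_append_right] at *; tauto
    · have := hab i0 hX0 m (by simp [hm])
      omega
  · intro a ha
    obtain ⟨m, hm, him⟩ := hmax a (by simp [ha])
    exact ⟨m, by simp [hm], him⟩
  · rintro ⟨L, M, h, hM⟩
    rcases List.eq_nil_or_concat C with h' | ⟨C0, c, rfl⟩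
    · exact hSI.1 h'
    · have h3 : (I ++ P ++ C0) ++ [c] = L ++ [M] := by rw [← h]; simp
      obtain ⟨rfl, h4⟩ := List.append_inj' h3 rfl
      simp at h4; subst h4
      have := hM p (by simp [hp])
      have := habv p hp c (by simp)
      omega

theorem iii_unique {J I P C I' P' C' : List ℕ} (h : I ++ P ++ C = I' ++ P' ++ C')
    (hE : EV (J ++ I) C) (hE' : EV (J ++ I') C') (hP : P ≠ []) (hP' : P' ≠ [])
    (ha : Abv P (J ++ I ++ C)) (ha' : Abv P' (J ++ I' ++ C')) : I = I' ∧ P = P' ∧ C = C' := by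
  have key : ∀ {I P C I' P' C' : List ℕ}, EV (J ++ I) C → EV (J ++ I') C' → P ≠ [] → P' ≠ [] →
      Abv P (J ++ I ++ C) → Abv P' (J ++ I' ++ C') → 
      (∃ Z, C = Z ++ C' ∧ I' ++ P' = (I ++ P) ++ Z) → C = C' := by
    rintro I P C I' P' C' hE hE' hP hP' ha ha' ⟨Z, rfl, h2⟩
    by_cases hZ : Z = []
    · simp [hZ]
    · obtain ⟨p, hp⟩ := List.exists_mem_of_ne_nil P hP
      obtain ⟨p', hp'⟩ := List.exists_mem_of_ne_nil P' hP'
      exfalso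
      rcases append_eq_cases h2 with ⟨W, rfl, h3⟩ | ⟨W, rfl, h3⟩
      · refine hE.2.1.2 Z C' rfl hZ hE'.2.1.1 ?_
        simp only [abv_append_left, abv_append_right] at *; tauto
      · unfold Abv at *
        have := ha p hp p' (by simp [hp'])
        have : p ∈ I' := by rw [h3]; simp [hp]
        have := ha' p' hp' p (by simp [this])
        omega
  have hC : C = C' := by
    rcases append_eq_cases h with h | h
    · exact key hE hE' hP hP' ha ha' h
    · exact (key hE' hE hP' hP ha' ha h).symm
  subst hC
  have h := List.append_cancel_right h
  have key2 : ∀ {I P I' P' : List ℕ}, EV (J ++ I) C → EV (J ++ I') C →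
      Abv P (J ++ I ++ C) → Abv P' (J ++ I' ++ C) → 
      (∃ Z, P = Z ++ P' ∧ I' = I ++ Z) → I = I' ∧ P = P' := by
    rintro I P I' P' hE hE' ha ha' ⟨Z, rfl, rfl⟩
    rcases Z with _ | ⟨z, Z⟩
    · simp
    · exfalso
      obtain ⟨m, hm, h⟩ := hE'.2.2.2.2 z (by simp)
      have := ha z (by simp) m (by simp [hm])
      omega
  rcases append_eq_cases h with h | h
  · have := key2 hE hE' ha ha' h; exact ⟨this.1, this.2, rfl⟩
  · have := key2 hE' hE ha' ha h; exact ⟨this.1.symm, this.2.symm, rfl⟩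

theorem top_iff {J L : List ℕ} {M : ℕ} (h1 : ∀ x ∈ J ++ L, x < M) :
    EV J (L ++ [M]) ↔ VP J L := by
  constructor
  · rintro ⟨hJ, hSI, hPA, hIV, hmax⟩
    refine ⟨hJ, hPA.mono (by simp), ?_⟩
    intro a ha b hb c d hcd g1 g2 g3
    exact hIV a ha b hb c d M (hcd.mono (by simp)) (by simp [bef_append, hcd.right]) g1 g2 g3
      (h1 b (by simp [hb]))
  · rintro ⟨hJ, hPA, hSV⟩
    refine ⟨hJ, ⟨by simp, ?_⟩, ⟨?_, ?_⟩, ?_, ?_⟩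
    · intro X Y hXY hX hY hab
      rcases List.eq_nil_or_concat Y with h' | ⟨Y0, c, rfl⟩
      · exact hY h'
      · have h3 : L ++ [M] = (X ++ Y0) ++ [c] := by rw [hXY]; simp
        obtain ⟨rfl, h4⟩ := List.append_inj' h3 rfl
        simp at h4; subst h4
        obtain ⟨x, hx⟩ := List.exists_mem_of_ne_nil X hX
        have := hab x hx M (by simp)
        have := h1 x (by simp [hx])
        omega
    · intro a b c d k1 k2 k3 g1 g2 g3 g4
      have := hPA.1 a b c d
      rw [← List.append_assoc] at k1 k2 k3
      generalize J ++ L = K at *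
      simp only [bef_append, bef_single, List.mem_singleton] at k1 k2 k3
      grind [Bef.left, Bef.right]
    · intro a b c d e f k1 k2 k3 k4 k5 g1 g2 g3 g4 g5
      have := hPA.2 a b c d e f
      rw [← List.append_assoc] at k1 k2 k3 k4 k5
      generalize J ++ L = K at *
      simp only [bef_append, bef_single, List.mem_singleton] at k1 k2 k3 k4 k5
      grind [Bef.left, Bef.right]
    · intro a ha b hb c d e k1 k2 g1 g2 g3 g4
      have := hSV a ha b hb c d
      have := h1 a (by simp [ha])
      have := h1 b (by simp [hb])
      simp only [bef_append, bef_single, List.mem_singleton, List.mem_append] at *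
      grind [Bef.left, Bef.right]
    · intro a ha
      exact ⟨M, by simp, h1 a (by simp [ha])⟩

end WilfProof

namespace WilfProof

theorem last_split (p : ℕ → Prop) (C : List ℕ) (h : ∃ x ∈ C, p x) :
    ∃ X e Y, C = X ++ e :: Y ∧ p e ∧ ∀ y ∈ Y, ¬ p y := by
  induction C with
  | nil => simp at h
  | cons c C ih =>
    by_cases h' : ∃ x ∈ C, p x
    · obtain ⟨X, e, Y, rfl, h1, h2⟩ := ih h'
      exact ⟨c :: X, e, Y, by simp, h1, h2⟩
    · refine ⟨[], c, C, by simp, by grind, by grind⟩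

theorem ev_sv {J C : List ℕ} (h : EV J C) (hnd : (J ++ C).Nodup) : SV J C := by
  obtain ⟨hJ, hSI, hPA, hIV, hmax⟩ := h
  intro a ha b hb c d hcd g1 g2 g3
  obtain ⟨X, e, Y, rfl, he, hY⟩ := last_split (fun x => b < x) C (hmax b hb)
  by_cases hY0 : Y = []
  · subst hY0
    have hd := hcd.right
    have hdX : d ∈ X := by
      simp at hd; rcases hd with h | h
      · exact h
      · omega
    exact hIV a ha b hb c d e hcd (by simp [bef_append, hdX]) g1 g2 g3 he
  · have := hSI.2 (X ++ [e]) Y (by simp) (by simp) hY0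
    simp only [Abv, not_forall, not_lt] at this
    obtain ⟨x, hx, y, hy, hxy⟩ := this
    have h1 := hY y hy
    have hnd' : y ≠ b ∧ x ≠ y := by
      simp only [List.nodup_append, List.mem_append, List.mem_cons] at hnd
      grind
    have hxX : x ∈ X := by
      simp at hx; rcases hx with h | h
      · exact h
      · omega
    refine hPA.1 b x e y ?_ ?_ ?_ (by omega) (by omega) he (by omega)
    · simp [bef_append, hb, hxX]
    · simp [bef_append, bef_cons, hxX]
    · simp [bef_append, bef_cons, hy]

theorem vp_cut_mk {a : ℕ} {J X Y : List ℕ} (h : VP J X) (hY : PA Y) (h1 : ∀ y ∈ Y, y < a)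
    (h2 : ∀ x ∈ X, a < x) (h3 : ∀ b ∈ J, a < b) : VP (a :: J) (X ++ Y) := by
  obtain ⟨hJ, hPA, hSV⟩ := h
  have hsk : PA ((J ++ X) ++ Y) := hPA.skew hY (by
    intro x hx y hy
    have := h1 y hy
    rcases List.mem_append.1 hx with h | h
    · have := h3 x h; omega
    · have := h2 x h; omega)
  have hJX : ∀ x ∈ J ++ X, a < x := by grind
  refine ⟨List.pairwise_cons.2 ⟨h3, hJ⟩, ⟨?_, ?_⟩, ?_⟩
  · have e : a :: J ++ (X ++ Y) = a :: ((J ++ X) ++ Y) := by simp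
    rw [e]
    generalize J ++ X = K at *
    intro p q r s k1 k2 k3 g1 g2 g3 g4
    have := hsk.1 p q r s
    simp only [bef_append, bef_cons, List.mem_append] at *
    grind [Bef.left, Bef.right]
  · have e : a :: J ++ (X ++ Y) = a :: ((J ++ X) ++ Y) := by simp
    rw [e]
    generalize J ++ X = K at *
    intro p q r s t u k1 k2 k3 k4 k5 g1 g2 g3 g4 g5
    have := hsk.2 p q r s t u
    simp only [bef_append, bef_cons, List.mem_append] at *
    grind [Bef.left, Bef.right]
  · intro p hp q hq c d k g1 g2 g3
    have := hSV p
    simp only [bef_append, List.mem_cons] at *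
    grind [Bef.left, Bef.right]

theorem vp_cut {a : ℕ} {J X Y : List ℕ} (h : VP (a :: J) (X ++ Y)) : VP J X ∧ PA Y := by
  obtain ⟨hJ, hPA, hSV⟩ := h
  refine ⟨⟨(List.pairwise_cons.1 hJ).2, hPA.mono ?_, ?_⟩, hPA.mono ?_⟩
  · have : a :: J ++ (X ++ Y) = a :: ((J ++ X) ++ Y) := by simp
    rw [this]; exact (List.sublist_append_left _ _).trans (List.sublist_cons_self _ _)
  · intro p hp q hq c d k
    exact hSV p (by simp [hp]) q (by simp [hq]) c d (k.mono (by simp))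
  · exact (List.sublist_append_right X Y).trans (List.sublist_append_right _ _)

theorem vp_int_mk {J B0 C B1 : List ℕ} (h : EV J C) (hnd : (J ++ C).Nodup) (h0 : PA B0) (h1 : PA B1)
    (a1 : Abv B0 (J ++ C)) (a2 : Abv (J ++ C) B1) (a3 : Abv B0 B1) : VP J (B0 ++ C ++ B1) := by
  have hSV := ev_sv h hnd
  obtain ⟨hJ, hSI, hPA, hIV, hmax⟩ := h
  have hdis : ∀ x ∈ J ++ [], x ∉ C := by
    intro x hx hx'
    rw [List.nodup_append] at hnd
    exact hnd.2.2 x (by simpa using hx) x hx' rfl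
  have hk := iii_back (J := J) (I := []) (P := B0) (C := C) (by simpa using hJ) (by simpa using hPA) h0
    (by simpa using hIV) hdis (by simpa using a1)
  refine ⟨hJ, ?_, ?_⟩
  · have e : J ++ (B0 ++ C ++ B1) = (J ++ ([] ++ B0 ++ C)) ++ B1 := by simp
    rw [e]
    refine hk.1.skew h1 ?_
    simp only [abv_append_left, List.nil_append] at *; tauto
  · intro p hp q hq c d k g1 g2 g3
    have := hSV p hp q hq c d
    have u1 := fun x hx => a1 x hx p (by simp [hp])
    have u2 := fun x hx => a2 p (by simp [hp]) x hx
    simp only [bef_append, List.mem_append] at *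
    grind [Bef.left, Bef.right]

theorem pred_split (a : ℕ) (L : List ℕ) (h : ∀ c d, Bef L c d → c < a → d < a) (ha : a ∉ L) :
    ∃ X Y, L = X ++ Y ∧ (∀ y ∈ Y, y < a) ∧ (∀ x ∈ X, a < x) := by
  induction L with
  | nil => exact ⟨[], [], by simp⟩
  | cons x L ih =>
    by_cases hx : x < a
    · refine ⟨[], x :: L, by simp, ?_, by simp⟩
      intro y hy
      rcases List.mem_cons.1 hy with rfl | hy
      · exact hx
      · exact h x y (by simp [bef_cons, hy]) hx
    · obtain ⟨X, Y, rfl, h1, h2⟩ := ih (fun c d hcd => h c d (by simp [bef_cons, hcd])) (by grind)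
      refine ⟨x :: X, Y, by simp, h1, ?_⟩
      simp at ha
      intro z hz
      rcases List.mem_cons.1 hz with rfl | hz
      · omega
      · exact h2 z hz

theorem vp_exists {a : ℕ} {J L : List ℕ} (h : VP (a :: J) L) (hnd : ((a :: J) ++ L).Nodup) :
    (∃ X Y, L = X ++ Y ∧ (∀ y ∈ Y, y < a) ∧ (∀ x ∈ X, a < x)) ∨
    (∃ B0 C B1, L = B0 ++ C ++ B1 ∧ EV (a :: J) C ∧ (∃ c ∈ C, c < a) ∧ PA B0 ∧ PA B1 ∧
      Abv B0 (a :: J ++ C) ∧ Abv (a :: J ++ C) B1 ∧ Abv B0 B1) := by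
  obtain ⟨hJ, hPA, hSV⟩ := h
  have haL : a ∉ L := by simp at hnd; grind
  by_cases hc : ∃ c d, Bef L c d ∧ c < a ∧ a < d
  · right
    obtain ⟨c, d, hcd, hca, had⟩ := hc
    obtain ⟨B0, C, B1, rfl, a1, a2, a3, hSI, hcC, hdC⟩ := comp_of_bef L c d hcd (by omega)
    have haJ : ∀ b ∈ a :: J, a ≤ b ∧ b < d := by
      intro b hb
      constructor
      · have := (List.pairwise_cons.1 hJ).1
        grind
      · by_contra hbd
        have hne : d ≠ b := by
          rintro rfl
          simp only [List.nodup_append] at hnd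
          exact hnd.2.2 d hb d (by simp [hdC]) rfl
        exact hSV a (by simp) b hb c d hcd hca had (by omega)
    refine ⟨B0, C, B1, rfl, ⟨hJ, hSI, hPA.mono ?_, ?_, ?_⟩, ⟨c, hcC, hca⟩, hPA.mono ?_, hPA.mono ?_, ?_, ?_, a3⟩
    · exact (List.Sublist.refl _).append (by simp)
    · intro p hp q hq x y z k1 k2 g1 g2 g3 g4
      exact hSV p hp q hq x y (k1.mono (by simp)) g1 g2 g3
    · intro b hb
      exact ⟨d, hdC, (haJ b hb).2⟩
    · rw [List.append_assoc B0]
      exact (List.sublist_append_left _ _).trans (List.sublist_append_right _ _)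
    · exact (List.sublist_append_right _ _).trans (List.sublist_append_right _ _)
    · rw [abv_append_right]
      refine ⟨?_, a1⟩
      intro x hx b hb
      exact (haJ b hb).2.trans (a1 x hx d hdC)
    · rw [abv_append_left]
      refine ⟨?_, a2⟩
      intro b hb y hy
      have := (haJ b hb).1
      have := a2 c hcC y hy
      omega
  · left
    refine pred_split a L ?_ haL
    intro c d hcd hca
    by_contra hda
    have : a ≠ d := by rintro rfl; exact haL hcd.right
    exact hc ⟨c, d, hcd, hca, by omega⟩

theorem vp_disjoint {a : ℕ} {J X Y B0 C B1 : List ℕ} (h : X ++ Y = B0 ++ C ++ B1)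
    (h1 : ∀ y ∈ Y, y < a) (h2 : ∀ x ∈ X, a < x) (hE : EV (a :: J) C) (hc : ∃ c ∈ C, c < a) 
    (a1 : Abv B0 (a :: J ++ C)) (a2 : Abv (a :: J ++ C) B1) : False := by
  obtain ⟨c, hcC, hca⟩ := hc
  obtain ⟨m, hm, ham⟩ := hE.2.2.2.2 a (by simp)
  have hab : Abv X Y := fun x hx y hy => (h1 y hy).trans (h2 x hx)
  have hcX : c ∉ X := fun h => by have := h2 c h; omega
  have hmY : m ∉ Y := fun h => by have := h1 m h; omega
  rcases append_eq_cases h with ⟨Z, rfl, h3⟩ | ⟨Z, rfl, rfl⟩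
  · rcases append_eq_cases h3 with ⟨W, rfl, rfl⟩ | ⟨W, rfl, rfl⟩
    · refine hE.2.1.2 W Z rfl ?_ ?_ ?_
      · rintro rfl; simp at hmY hm; tauto
      · rintro rfl; simp at hcX hcC; tauto
      · simp only [abv_append_left, abv_append_right] at *; tauto
    · simp at hmY; tauto
  · simp at hcX; tauto

theorem cut_unique {a : ℕ} {X Y X' Y' : List ℕ} (h : X ++ Y = X' ++ Y')
    (h1 : ∀ y ∈ Y, y < a) (h2 : ∀ x ∈ X, a < x) (h1' : ∀ y ∈ Y', y < a) (h2' : ∀ x ∈ X', a < x) :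
    X = X' ∧ Y = Y' := by
  rcases append_eq_cases h with ⟨Z, rfl, rfl⟩ | ⟨Z, rfl, rfl⟩
  · rcases Z with _ | ⟨z, Z⟩
    · simp
    · have := h1 z (by simp); have := h2' z (by simp); omega
  · rcases Z with _ | ⟨z, Z⟩
    · simp
    · have := h1' z (by simp); have := h2 z (by simp); omega

theorem int_unique {a : ℕ} {J B0 C B1 B0' C' B1' : List ℕ} (h : B0 ++ C ++ B1 = B0' ++ C' ++ B1')
    (hE : EV (a :: J) C) (a1 : Abv B0 (a :: J ++ C)) (a2 : Abv (a :: J ++ C) B1) 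
    (a3 : Abv B0 B1)
    (hE' : EV (a :: J) C') (a1' : Abv B0' (a :: J ++ C')) (a2' : Abv (a :: J ++ C') B1')
    (a3' : Abv B0' B1') :
    B0 = B0' ∧ C = C' ∧ B1 = B1' := by
  have key : ∀ {B0 C B1 B0' C' B1' : List ℕ}, EV (a :: J) C → 
      Abv (a :: J ++ C') B1' → Abv B0' B1' → EV (a :: J) C' →
      (∃ Z, B1' = Z ++ B1 ∧ B0 ++ C = B0' ++ C' ++ Z) → B1 = B1' := by
    rintro B0 C B1 B0' C' B1' hE a2' a3' hE' ⟨Z, rfl, h2⟩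
    by_cases hZ : Z = []
    · simp [hZ]
    · exfalso
      obtain ⟨m, hm, ham⟩ := hE.2.2.2.2 a (by simp)
      rcases append_eq_cases h2 with ⟨W, rfl, h3⟩ | ⟨W, rfl, rfl⟩
      · by_cases hW : W = []
        · subst hW
          have := a2' a (by simp) m (by simpa using Or.inl hm)
          omega
        · refine hE.2.1.2 W Z rfl hW hZ ?_
          rcases append_eq_cases h3 with ⟨W', rfl, rfl⟩ | ⟨W', rfl, rfl⟩
          · simp only [abv_append_left, abv_append_right] at *; tauto
          · simp only [abv_append_left, abv_append_right] at *; tauto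
      · have := a2' a (by simp) m (by simp [hm])
        omega
  have hB : B1 = B1' := by
    rcases append_eq_cases h with ⟨Z, h1, h2⟩ | ⟨Z, h1, h2⟩
    · exact (key hE' a2 a3 hE ⟨Z, h1, h2⟩).symm
    · exact key hE a2' a3' hE' ⟨Z, h1, h2⟩
  subst hB
  have h := List.append_cancel_right h
  rw [abv_append_right] at a1 a1'
  have := last_comp_unique h a1.2 a1'.2 hE.2.1 hE'.2.1
  exact ⟨this.1, this.2, rfl⟩

theorem ev_cons_low {a : ℕ} {J C : List ℕ} (h1 : ∀ x ∈ J ++ C, a < x) :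
    EV (a :: J) C ↔ EV J C := by
  constructor
  · rintro ⟨hJ, hSI, hPA, hIV, hmax⟩
    refine ⟨(List.pairwise_cons.1 hJ).2, hSI, hPA.mono (by simp), ?_, fun b hb => hmax b (by simp [hb])⟩
    intro p hp q hq
    exact hIV p (by simp [hp]) q (by simp [hq])
  · rintro ⟨hJ, hSI, hPA, hIV, hmax⟩
    refine ⟨List.pairwise_cons.2 ⟨fun b hb => h1 b (by simp [hb]), hJ⟩, hSI, ⟨?_, ?_⟩, ?_, ?_⟩
    · rw [List.cons_append]
      generalize J ++ C = K at *
      intro p q r s k1 k2 k3 g1 g2 g3 g4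
      have := hPA.1 p q r s
      simp only [bef_cons] at *
      grind [Bef.left, Bef.right]
    · rw [List.cons_append]
      generalize J ++ C = K at *
      intro p q r s t u k1 k2 k3 k4 k5 g1 g2 g3 g4 g5
      have := hPA.2 p q r s t u
      simp only [bef_cons] at *
      grind [Bef.left, Bef.right]
    · intro p hp q hq x y z k1 k2 g1 g2 g3 g4
      have := h1 x (by simp [k1.left])
      have := h1 y (by simp [k1.right])
      refine hIV p ?_ q ?_ x y z k1 k2 g1 g2 g3 g4
      · rcases List.mem_cons.1 hp with rfl | h
        · omega
        · exact h
      · rcases List.mem_cons.1 hq with rfl | h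
        · omega
        · exact h
    · intro b hb
      rcases List.mem_cons.1 hb with rfl | h
      · obtain ⟨m, hm⟩ := List.exists_mem_of_ne_nil C hSI.1
        exact ⟨m, hm, h1 m (by simp [hm])⟩
      · exact hmax b h

end WilfProof

namespace WilfProof
open List (Perm range')

theorem card_decomp {ι α β : Type*} (S : Set α) (idx : Finset ι) (T : ι → Set β) (g : β → α)
    (ix : β → ι) (hfin : ∀ i ∈ idx, (T i).Finite) (hix : ∀ i ∈ idx, ∀ b ∈ T i, ix b = i)
    (hmap : ∀ i ∈ idx, ∀ b ∈ T i, g b ∈ S)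
    (hinj : ∀ i ∈ idx, ∀ b ∈ T i, ∀ i' ∈ idx, ∀ b' ∈ T i', g b = g b' → b = b')
    (hsurj : ∀ a ∈ S, ∃ b, ∃ i ∈ idx, b ∈ T i ∧ g b = a) :
    S.ncard = ∑ i ∈ idx, (T i).ncard := by
  classical
  have hS : S = Set.image g (⋃ i ∈ idx, T i) := by
    ext a
    simp only [Set.mem_image, Set.mem_iUnion]
    constructor
    · intro ha
      obtain ⟨b, i, hi, hb, h⟩ := hsurj a ha
      exact ⟨b, ⟨i, hi, hb⟩, h⟩
    · rintro ⟨b, ⟨i, hi, hb⟩, rfl⟩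
      exact hmap i hi b hb
  rw [hS, Set.ncard_image_of_injOn]
  · clear hmap hinj hsurj hS
    induction idx using Finset.induction_on with
    | empty => simp
    | insert i s his ih =>
      have hf : (⋃ x ∈ s, T x).Finite :=
        Set.Finite.biUnion (Finset.finite_toSet s) (fun i hi => hfin i (by
          have : i ∈ s := hi
          simp [this]))
      rw [Finset.sum_insert his, Finset.set_biUnion_insert, Set.ncard_union_eq (hs := hfin i (by simp)) (ht := hf), ih]
      · exact fun i hi => hfin i (by simp [hi])
      · exact fun i hi => hix i (by simp [hi])
      · rw [Set.disjoint_left]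
        intro b hb hb'
        simp only [Set.mem_iUnion] at hb'
        obtain ⟨k, hk, hb'⟩ := hb'
        have h1 := hix i (by simp) b hb
        have h2 := hix k (by simp [hk]) b hb'
        exact his (by rw [← h1, h2]; exact hk)
  · intro b hb b' hb' h
    simp only [Set.mem_iUnion] at hb hb'
    obtain ⟨i, hi, hb⟩ := hb
    obtain ⟨i', hi', hb'⟩ := hb'
    exact hinj i hi b hb i' hi' b' hb' h

def Ls (P : List ℕ → Prop) (s n : ℕ) : Set (List ℕ) := {l | l.Perm (range' s n) ∧ P l}

def Ps (Q : List ℕ → List ℕ → Prop) (s j r : ℕ) : Set (List ℕ × List ℕ) :=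
  {p | p.1.length = j ∧ (p.1 ++ p.2).Perm (range' s (j + r)) ∧ Q p.1 p.2}

theorem Ls_finite (P : List ℕ → Prop) (s n : ℕ) : (Ls P s n).Finite := by
  refine Set.Finite.subset (List.finite_toSet (range' s n).permutations) ?_
  rintro l ⟨h, -⟩
  exact List.mem_permutations.2 h

theorem Ps_finite (Q : List ℕ → List ℕ → Prop) (s j r : ℕ) : (Ps Q s j r).Finite := by
  refine Set.Finite.of_injOn (f := fun p => p.1 ++ p.2) (t := Ls (fun _ => True) s (j + r)) ?_ ?_
    (Ls_finite _ _ _)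
  · rintro p ⟨-, h, -⟩
    exact ⟨h, trivial⟩
  · rintro ⟨a, b⟩ ⟨h1, -⟩ ⟨a', b'⟩ ⟨h2, -⟩ h
    have := List.append_inj h (by simpa using h1.trans h2.symm)
    exact Prod.ext this.1 this.2

theorem abv_of_range {X Y : List ℕ} {s a b : ℕ} (hY : Y.Perm (range' s b))
    (hX : X.Perm (range' (s + b) a)) : Abv X Y := by
  intro x hx y hy
  have h1 := hX.mem_iff.1 hx
  have h2 := hY.mem_iff.1 hy
  simp at h1 h2
  omega

theorem perm_join {X Y : List ℕ} {s a b : ℕ} (hY : Y.Perm (range' s b))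
    (hX : X.Perm (range' (s + b) a)) : (X ++ Y).Perm (range' s (a + b)) := by
  have h : range' s (a + b) = range' s b ++ range' (s + b) a := by
    rw [List.range'_append_1, Nat.add_comm]
  rw [h]
  exact List.perm_append_comm.trans (hY.append hX)

theorem perm_split {X Y : List ℕ} {s n : ℕ} (h : (X ++ Y).Perm (range' s n)) (hab : Abv X Y) :
    Y.Perm (range' s Y.length) ∧ X.Perm (range' (s + Y.length) X.length) := by
  have hlen : X.length + Y.length = n := by simpa using h.length_eq
  have hsort : ∀ l : List ℕ, (l.mergeSort (· ≤ ·)).Pairwise (· ≤ ·) := fun l => by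
    have := List.pairwise_mergeSort (le := fun a b : ℕ => decide (a ≤ b))
      (by simp; omega) (by simp; omega) l
    simpa using this
  set X' := X.mergeSort (· ≤ ·)
  set Y' := Y.mergeSort (· ≤ ·)
  have hX' : X'.Perm X := List.mergeSort_perm _ _
  have hY' : Y'.Perm Y := List.mergeSort_perm _ _
  have hp : (Y' ++ X').Perm (range' s n) :=
    ((hY'.append hX').trans List.perm_append_comm).trans h
  have hs : (Y' ++ X').Pairwise (· ≤ ·) := by
    rw [List.pairwise_append]
    refine ⟨hsort _, hsort _, ?_⟩
    intro a ha b hb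
    exact (hab b (hX'.mem_iff.1 hb) a (hY'.mem_iff.1 ha)).le
  have heq : Y' ++ X' = range' s n := by
    refine hp.eq_of_pairwise (le := (· ≤ ·)) (fun a b _ _ h1 h2 => le_antisymm h1 h2) hs ?_
    exact (List.pairwise_lt_range' (s := s) (n := n)).imp (fun h => le_of_lt h)
  have h2 : range' s n = range' s Y.length ++ range' (s + Y.length) X.length := by
    rw [List.range'_append_1, Nat.add_comm, hlen]
  rw [h2] at heq
  have := List.append_inj heq (by simpa using hY'.length_eq)
  exact ⟨hY'.symm.trans (by rw [this.1]), hX'.symm.trans (by rw [this.2])⟩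

theorem Ls_shift (P : List ℕ → Prop) (hP : ∀ l s, P (l.map (· + s)) ↔ P l) (s n : ℕ) :
    (Ls P s n).ncard = (Ls P 0 n).ncard := by
  symm
  refine Set.ncard_congr (fun l _ => l.map (· + s)) ?_ ?_ ?_
  · rintro l ⟨h1, h2⟩
    refine ⟨?_, (hP _ _).2 h2⟩
    have := h1.map (· + s)
    rw [show (fun x => x + s) = (fun x => s + x) by ext; omega, List.map_add_range'] at this
    simpa [Nat.add_comm] using this
  · intro l l' _ _ h
    exact List.map_injective_iff.2 (add_left_injective s) h
  · rintro l ⟨h1, h2⟩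
    have hm : (l.map (· - s)).map (· + s) = l := by
      rw [List.map_map]
      conv_rhs => rw [← List.map_id l]
      refine List.map_congr_left ?_
      intro x hx
      have := h1.mem_iff.1 hx
      simp at this ⊢; omega
    refine ⟨l.map (· - s), ⟨?_, ?_⟩, hm⟩
    · have := h1.map (· - s)
      rwa [List.map_sub_range' (by omega), Nat.sub_self] at this
    · rw [← hP _ s, hm]; exact h2

theorem Ps_shift (Q : List ℕ → List ℕ → Prop)
    (hQ : ∀ J l s, Q (J.map (· + s)) (l.map (· + s)) ↔ Q J l) (s j r : ℕ) :
    (Ps Q s j r).ncard = (Ps Q 0 j r).ncard := by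
  have key : ∀ s, (Ps Q s j r).ncard =
      (Ls (fun l => Q (l.take j) (l.drop j)) s (j + r)).ncard := by
    intro s
    refine Set.ncard_congr (fun p _ => p.1 ++ p.2) ?_ ?_ ?_
    · rintro ⟨a, b⟩ ⟨rfl, h1, h2⟩
      refine ⟨h1, ?_⟩
      simpa using h2
    · rintro ⟨a, b⟩ ⟨a', b'⟩ ⟨h1, -⟩ ⟨h2, -⟩ h
      have := List.append_inj h (by simpa using h1.trans h2.symm)
      exact Prod.ext this.1 this.2
    · rintro l ⟨h1, h2⟩
      refine ⟨(l.take j, l.drop j), ⟨?_, ?_, h2⟩, ?_⟩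
      · have := h1.length_eq
        simp at this ⊢; omega
      · simpa using h1
      · simp
  rw [key, key]
  refine Ls_shift _ ?_ _ _
  intro l s
  simp only [← List.map_take, ← List.map_drop]
  exact hQ _ _ _
end WilfProof

namespace WilfProof
open List (Perm range')

theorem bef_shift {l : List ℕ} {s a b : ℕ} : Bef (l.map (· + s)) (a + s) (b + s) ↔ Bef l a b := by
  rw [bef_map]
  constructor
  · rintro ⟨a', b', h1, h2, h⟩
    obtain rfl : a = a' := by omega
    obtain rfl : b = b' := by omega
    exact h
  · intro h; exact ⟨a, b, rfl, rfl, h⟩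

/-- Separable: avoids 2413 and 3142. -/
def SEP (l : List ℕ) : Prop :=
  ∀ a b c d, Bef l a b → Bef l b c → Bef l c d →
    ¬ (c < a ∧ a < d ∧ d < b) ∧ ¬ (b < d ∧ d < a ∧ a < c)

theorem bef_shift_of {l : List ℕ} {s a b : ℕ} (h : Bef (l.map (· + s)) a b) :
    s ≤ a ∧ s ≤ b ∧ Bef l (a - s) (b - s) := by
  rw [bef_map] at h
  obtain ⟨a', b', rfl, rfl, h⟩ := h
  simpa using h

theorem PA_map (l : List ℕ) (s : ℕ) : PA (l.map (· + s)) ↔ PA l := by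
  constructor
  · rintro ⟨h1, h2⟩
    refine ⟨fun a b c d k1 k2 k3 g1 g2 g3 g4 => ?_,
      fun a b c d e f k1 k2 k3 k4 k5 g1 g2 g3 g4 g5 => ?_⟩
    · exact h1 _ _ _ _ (bef_shift.2 k1) (bef_shift.2 k2) (bef_shift.2 k3) (by omega) (by omega)
        (by omega) (by omega)
    · exact h2 _ _ _ _ _ _ (bef_shift.2 k1) (bef_shift.2 k2) (bef_shift.2 k3) (bef_shift.2 k4)
        (bef_shift.2 k5) (by omega) (by omega) (by omega) (by omega) (by omega)
  · rintro ⟨h1, h2⟩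
    refine ⟨fun a b c d k1 k2 k3 g1 g2 g3 g4 => ?_,
      fun a b c d e f k1 k2 k3 k4 k5 g1 g2 g3 g4 g5 => ?_⟩
    · have l1 := bef_shift_of k1
      have l2 := bef_shift_of k2
      have l3 := bef_shift_of k3
      exact h1 _ _ _ _ l1.2.2 l2.2.2 l3.2.2 (by omega) (by omega)
        (by omega) (by omega)
    · have l1 := bef_shift_of k1
      have l2 := bef_shift_of k2
      have l3 := bef_shift_of k3
      have l4 := bef_shift_of k4
      have l5 := bef_shift_of k5
      exact h2 _ _ _ _ _ _ l1.2.2 l2.2.2 l3.2.2 l4.2.2 l5.2.2 (by omega) (by omega) (by omega)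
        (by omega) (by omega)

theorem SEP_map (l : List ℕ) (s : ℕ) : SEP (l.map (· + s)) ↔ SEP l := by
  constructor
  · intro h1 a b c d k1 k2 k3
    have := h1 _ _ _ _ (bef_shift.2 k1) (bef_shift.2 k2) (bef_shift.2 k3)
    omega
  · intro h1 a b c d k1 k2 k3
    have l1 := bef_shift_of k1
    have l2 := bef_shift_of k2
    have l3 := bef_shift_of k3
    have := h1 _ _ _ _ l1.2.2 l2.2.2 l3.2.2
    omega

theorem Abv_map {X Y : List ℕ} {s : ℕ} : Abv (X.map (· + s)) (Y.map (· + s)) ↔ Abv X Y := by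
  simp [Abv]

theorem SI_map (l : List ℕ) (s : ℕ) : SI (l.map (· + s)) ↔ SI l := by
  constructor
  · rintro ⟨h1, h2⟩
    refine ⟨by simpa using h1, ?_⟩
    rintro X Y rfl hX hY hab
    exact h2 (X.map (· + s)) (Y.map (· + s)) (by simp) (by simpa using hX) (by simpa using hY)
      (Abv_map.2 hab)
  · rintro ⟨h1, h2⟩
    refine ⟨by simpa using h1, ?_⟩
    intro X Y h hX hY hab
    obtain ⟨X, Y, rfl, rfl, rfl⟩ := List.map_eq_append_iff.1 h
    exact h2 X Y rfl (by simpa using hX) (by simpa using hY) (Abv_map.1 hab)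

theorem Inc_map (l : List ℕ) (s : ℕ) : Inc (l.map (· + s)) ↔ Inc l := by
  simp [Inc, List.pairwise_map]

theorem IV_map (J l : List ℕ) (s : ℕ) : IV (J.map (· + s)) (l.map (· + s)) ↔ IV J l := by
  constructor
  · intro h a ha b hb c d e k1 k2 g1 g2 g3 g4
    exact h (a + s) (by simpa using ha) (b + s) (by simpa using hb) _ _ _ (bef_shift.2 k1)
      (bef_shift.2 k2) (by omega) (by omega) (by omega) (by omega)
  · intro h a ha b hb c d e k1 k2 g1 g2 g3 g4
    have l1 := bef_shift_of k1
    have l2 := bef_shift_of k2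
    simp only [List.mem_map] at ha hb
    obtain ⟨a, ha, rfl⟩ := ha
    obtain ⟨b, hb, rfl⟩ := hb
    exact h a ha b hb _ _ _ l1.2.2 l2.2.2 (by omega) (by omega) (by omega) (by omega)

theorem SV_map (J l : List ℕ) (s : ℕ) : SV (J.map (· + s)) (l.map (· + s)) ↔ SV J l := by
  constructor
  · intro h a ha b hb c d k1 g1 g2 g3
    exact h (a + s) (by simpa using ha) (b + s) (by simpa using hb) _ _ (bef_shift.2 k1)
      (by omega) (by omega) (by omega)
  · intro h a ha b hb c d k1 g1 g2 g3
    have l1 := bef_shift_of k1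
    simp only [List.mem_map] at ha hb
    obtain ⟨a, ha, rfl⟩ := ha
    obtain ⟨b, hb, rfl⟩ := hb
    exact h a ha b hb _ _ l1.2.2 (by omega) (by omega) (by omega)

theorem VP_map (J l : List ℕ) (s : ℕ) : VP (J.map (· + s)) (l.map (· + s)) ↔ VP J l := by
  unfold VP
  rw [Inc_map, SV_map, ← List.map_append, PA_map]

theorem EV_map (J l : List ℕ) (s : ℕ) : EV (J.map (· + s)) (l.map (· + s)) ↔ EV J l := by
  unfold EV
  rw [Inc_map, IV_map, ← List.map_append, PA_map, SI_map]
  simp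

/-- `EV` together with an element of `C` below all of `J`. -/
def KV (J C : List ℕ) : Prop := EV J C ∧ ∃ c ∈ C, ∀ a ∈ J, c < a

theorem KV_map (J l : List ℕ) (s : ℕ) : KV (J.map (· + s)) (l.map (· + s)) ↔ KV J l := by
  unfold KV
  rw [EV_map]
  simp

/-- counting -/
noncomputable def cf (n : ℕ) : ℕ := (Ls PA 0 n).ncard
noncomputable def cb (n : ℕ) : ℕ := (Ls SEP 0 n).ncard
noncomputable def cs (n : ℕ) : ℕ := (Ls (fun l => SI l ∧ SEP l) 0 n).ncard
noncomputable def ce (r j : ℕ) : ℕ := (Ps EV 0 j r).ncard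
noncomputable def ck (r j : ℕ) : ℕ := (Ps KV 0 j r).ncard
noncomputable def cv (r j : ℕ) : ℕ := (Ps VP 0 j r).ncard

theorem Ls_zero (P : List ℕ → Prop) (h : P []) : (Ls P 0 0).ncard = 1 := by
  rw [Set.ncard_eq_one]
  refine ⟨[], ?_⟩
  ext l
  simp only [Ls, Set.mem_setOf_eq, List.range'_zero, List.perm_nil, Set.mem_singleton_iff]
  constructor
  · exact fun h => h.1
  · rintro rfl; exact ⟨rfl, h⟩

theorem skew_rec (P : List ℕ → Prop) (hm : ∀ l l' : List ℕ, l'.Sublist l → P l → P l')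
    (hs : ∀ X Y, P X → P Y → Abv X Y → P (X ++ Y)) (hP : ∀ l s, P (l.map (· + s)) ↔ P l)
    (n : ℕ) (hn : 0 < n) :
    (Ls P 0 n).ncard = ∑ p ∈ Finset.HasAntidiagonal.antidiagonal n,
      (Ls P 0 p.1).ncard * (Ls (fun l => SI l ∧ P l) 0 p.2).ncard := by
  rw [card_decomp (Ls P 0 n) (Finset.HasAntidiagonal.antidiagonal n)
    (fun p => Ls P p.2 p.1 ×ˢ Ls (fun l => SI l ∧ P l) 0 p.2) (fun b => b.1 ++ b.2)
    (fun b => (b.1.length, b.2.length))]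
  · refine Finset.sum_congr rfl ?_
    intro p _
    rw [Set.ncard_prod, Ls_shift P hP]
  · intro i _
    exact (Ls_finite _ _ _).prod (Ls_finite _ _ _)
  · rintro ⟨i, j⟩ _ ⟨X, C⟩ ⟨⟨h1, _⟩, ⟨h2, _⟩⟩
    have := h1.length_eq
    have := h2.length_eq
    simp_all
  · rintro ⟨i, j⟩ hij ⟨X, C⟩ ⟨⟨h1, h1'⟩, ⟨h2, h2'⟩⟩
    simp only [Finset.HasAntidiagonal.mem_antidiagonal] at hij
    subst hij
    refine ⟨perm_join h2 (by simpa using h1), hs _ _ h1' h2'.2 (abv_of_range h2 (by simpa using h1))⟩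
  · rintro ⟨i, j⟩ hij ⟨X, C⟩ ⟨⟨h1, h1'⟩, ⟨h2, h2'⟩⟩ ⟨i', j'⟩ hij' ⟨X', C'⟩ ⟨⟨g1, g1'⟩, ⟨g2, g2'⟩⟩ h
    have := last_comp_unique h (abv_of_range h2 (by simpa using h1))
      (abv_of_range g2 (by simpa using g1)) h2'.1 g2'.1
    exact Prod.ext this.1 this.2
  · rintro l ⟨h1, h2⟩
    have hl : l ≠ [] := by
      rintro rfl
      have := h1.length_eq
      simp at this; omega
    obtain ⟨X, C, rfl, h3, h4⟩ := last_comp l hl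
    have h5 := perm_split h1 h3
    refine ⟨(X, C), (X.length, C.length), ?_, ⟨⟨by simpa using h5.2, hm _ _ (by simp) h2⟩,
      ⟨h5.1, h4, hm _ _ (by simp) h2⟩⟩, rfl⟩
    have := h1.length_eq
    simpa using this

theorem PA_nil : PA [] := ⟨fun _ _ _ _ h => (bef_nil _ _ h).elim, fun _ _ _ _ _ _ h => (bef_nil _ _ h).elim⟩

theorem SEP_nil : SEP [] := fun _ _ _ _ h => (bef_nil _ _ h).elim

theorem SEP.mono {l l' : List ℕ} (hs : l'.Sublist l) (h : SEP l) : SEP l' :=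
  fun a b c d k1 k2 k3 => h a b c d (k1.mono hs) (k2.mono hs) (k3.mono hs)

theorem SEP.skew {X Y : List ℕ} (hX : SEP X) (hY : SEP Y) (h : Abv X Y) : SEP (X ++ Y) := by
  unfold Abv at h
  intro a b c d h1 h2 h3
  simp only [bef_append] at h1 h2 h3
  have := hX a b c d
  have := hY a b c d
  grind [Bef.left, Bef.right]

theorem cf_zero : cf 0 = 1 := Ls_zero _ PA_nil
theorem cb_zero : cb 0 = 1 := Ls_zero _ SEP_nil

theorem Ps_zero (Q : List ℕ → List ℕ → Prop) (r : ℕ) :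
    (Ps Q 0 0 r).ncard = (Ls (Q []) 0 r).ncard := by
  refine Set.ncard_congr (fun p _ => p.2) ?_ ?_ ?_
  · rintro ⟨a, b⟩ ⟨h1, h2, h3⟩
    obtain rfl : a = [] := by simpa using h1
    exact ⟨by simpa using h2, h3⟩
  · rintro ⟨a, b⟩ ⟨a', b'⟩ ⟨h1, -⟩ ⟨h2, -⟩ h
    have h1 : a = [] := by simpa using h1
    have h2 : a' = [] := by simpa using h2
    simp_all
  · rintro l ⟨h1, h2⟩
    exact ⟨([], l), ⟨rfl, by simpa using h1, h2⟩, rfl⟩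

theorem cv_zero (r : ℕ) : cv r 0 = cf r := by
  unfold cv cf
  rw [Ps_zero]
  congr 2
  ext l
  simp [VP, SV]

theorem cf_rec (n : ℕ) (hn : 0 < n) :
    cf n = ∑ p ∈ Finset.HasAntidiagonal.antidiagonal n, cf p.1 * ce p.2 0 := by
  unfold cf ce
  rw [skew_rec PA (fun l l' h h' => h'.mono h) (fun _ _ h1 h2 h3 => h1.skew h2 h3) PA_map n hn]
  refine Finset.sum_congr rfl fun p _ => ?_
  rw [Ps_zero]
  congr 3
  ext l
  simp [EV, IV]

theorem cb_rec (n : ℕ) (hn : 0 < n) :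
    cb n = ∑ p ∈ Finset.HasAntidiagonal.antidiagonal n, cb p.1 * cs p.2 := 
  skew_rec SEP (fun l l' h h' => h'.mono h) (fun _ _ h1 h2 h3 => h1.skew h2 h3) SEP_map n hn

theorem ce_zero (j : ℕ) : ce 0 j = 0 := by
  unfold ce
  rw [Set.ncard_eq_zero (Ps_finite _ _ _ _)]
  ext ⟨a, b⟩
  simp only [Ps, Set.mem_setOf_eq, Set.mem_empty_iff_false, iff_false]
  rintro ⟨rfl, h1, h2⟩
  have := h1.length_eq
  simp at this
  exact h2.2.1.1 this

end WilfProof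

namespace WilfProof
open List (Perm range')
open Finset.HasAntidiagonal (antidiagonal mem_antidiagonal)

theorem card_split {α β : Type*} (S A : Set α) (B : Set β) (g : β → α) (hS : S.Finite)
    (hA : A ⊆ S) (hg : ∀ b ∈ B, g b ∈ S ∧ g b ∉ A) (hinj : Set.InjOn g B)
    (hsurj : ∀ a ∈ S, a ∉ A → ∃ b ∈ B, g b = a) : S.ncard = A.ncard + B.ncard := by
  have h : S = A ∪ Set.image g B := by
    ext a
    constructor
    · intro ha
      by_cases h : a ∈ A
      · exact Or.inl h
      · obtain ⟨b, hb, rfl⟩ := hsurj a ha h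
        exact Or.inr ⟨b, hb, rfl⟩
    · rintro (h | ⟨b, hb, rfl⟩)
      · exact hA h
      · exact (hg b hb).1
  have h2 : (Set.image g B).Finite := hS.subset (by rw [h]; exact Set.subset_union_right)
  rw [← Set.ncard_image_of_injOn hinj, h, Set.ncard_union_eq ?_ (hS.subset hA) h2]
  rw [Set.disjoint_left]
  rintro a ha ⟨b, hb, rfl⟩
  exact (hg b hb).2 ha

theorem single_perm {a s : ℕ} (h : [a].Perm (range' s 1)) : a = s := by
  have := h.mem_iff (a := a)
  simp at this
  exact this

theorem ce_rec4 (c j : ℕ) : ce c (j + 1) = ck c (j + 1) + ce c j := by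
  unfold ce ck
  rw [← Ps_shift EV EV_map 1 j c]
  refine card_split _ _ _ (fun p => (0 :: p.1, p.2)) (Ps_finite _ _ _ _) ?_ ?_ ?_ ?_
  · rintro p ⟨h1, h2, h3⟩
    exact ⟨h1, h2, h3.1⟩
  · rintro ⟨J, C⟩ ⟨rfl, h2, h3⟩
    refine ⟨⟨by simp, ?_, ?_⟩, ?_⟩
    · have := perm_join (s := 0) (b := 1) (Y := [0]) (by simp) (by simpa using h2)
      have h4 : (0 :: J ++ C).Perm (J ++ C ++ [0]) := by
        simpa using (List.perm_append_singleton 0 (J ++ C)).symm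
      refine h4.trans (this.trans ?_)
      rw [show J.length + c + 1 = J.length + 1 + c by omega]
    · refine (ev_cons_low ?_).2 h3
      intro x hx
      have := h2.mem_iff.1 hx
      simp at this; omega
    · rintro ⟨-, -, -, c, hc, h⟩
      have := h 0 (by simp)
      omega
  · rintro ⟨J, C⟩ _ ⟨J', C'⟩ _ h
    simpa using h
  · rintro ⟨J, C⟩ ⟨h1, h2, h3⟩ hn
    obtain ⟨a, J, rfl⟩ := List.exists_cons_of_length_eq_add_one h1
    obtain rfl : J.length = j := by simpa using h1
    have hJ := List.pairwise_cons.1 h3.1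
    have hnd : (a :: J ++ C).Nodup := h2.nodup_iff.2 List.nodup_range'
    have hlow : ∀ x ∈ J ++ C, a < x := by
      intro x hx
      rcases List.mem_append.1 hx with hx | hx
      · exact hJ.1 x hx
      · by_contra hlt
        have hne : x ≠ a := by rintro rfl; simp at hnd; exact hnd.1.2 hx
        have hxa : x < a := by omega
        exact hn ⟨h1, h2, h3, x, hx, fun b hb => by
          rcases List.mem_cons.1 hb with rfl | hb
          · exact hxa
          · exact hxa.trans (hJ.1 b hb)⟩
    have h4 : (J ++ C ++ [a]).Perm (a :: J ++ C) := by
        simpa using (List.perm_append_singleton a (J ++ C))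
    have h5 := perm_split (h4.trans h2) (by
      intro x hx y hy
      obtain rfl : y = a := by simpa using hy
      exact hlow x hx)
    obtain rfl : a = 0 := single_perm h5.1
    refine ⟨(J, C), ⟨rfl, ?_, (ev_cons_low hlow).1 h3⟩, rfl⟩
    have hl := h2.length_eq
    have h6 := h5.2
    rw [show (J ++ C).length = J.length + c by simp at hl ⊢; omega] at h6
    simpa using h6

/-- pairs with a longer first component -/
def Ts (j q : ℕ) : Set (List ℕ × List ℕ) :=
  {p | j < p.1.length ∧ (p.1 ++ p.2).Perm (range' 0 (j + q)) ∧ EV p.1 p.2}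

noncomputable def ct (q j : ℕ) : ℕ := (Ts j q).ncard

theorem ct_zero (j : ℕ) : ct 0 j = 0 := by
  unfold ct
  have : Ts j 0 = ∅ := by
    ext ⟨a, b⟩
    simp only [Ts, Set.mem_setOf_eq, Set.mem_empty_iff_false, iff_false]
    rintro ⟨h, h1, h2⟩
    have := h1.length_eq
    simp at this
    omega
  rw [this]; simp

theorem Ts_finite (j q : ℕ) : (Ts j q).Finite := by
  refine Set.Finite.subset (Set.Finite.biUnion (Finset.finite_toSet (Finset.range (j + q + 1)))
    (t := fun i => Ps EV 0 i (j + q - i)) (fun i _ => Ps_finite _ _ _ _)) ?_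
  rintro ⟨a, b⟩ ⟨h1, h2, h3⟩
  have := h2.length_eq
  simp at this
  simp only [Set.mem_iUnion]
  refine ⟨a.length, ?_, rfl, ?_, h3⟩
  · simp; omega
  · rwa [show a.length + (j + q - a.length) = j + q by omega]

theorem ct_succ (n j : ℕ) : ct (n + 1) j = ce n (j + 1) + ct n (j + 1) := by
  unfold ct ce
  refine card_split _ _ _ id (Ts_finite _ _) ?_ ?_ ?_ ?_
  · rintro p ⟨h1, h2, h3⟩
    refine ⟨by omega, ?_, h3⟩
    rwa [show j + (n + 1) = j + 1 + n by omega]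
  · rintro p ⟨h1, h2, h3⟩
    refine ⟨⟨by simp; omega, ?_, h3⟩, ?_⟩
    · rwa [show j + (n + 1) = j + 1 + n by omega]
    · rintro ⟨h4, -⟩
      simp at h4; omega
  · exact fun _ _ _ _ h => h
  · rintro p ⟨h1, h2, h3⟩ h
    have h2' : (p.1 ++ p.2).Perm (range' 0 (j + 1 + n)) := by
      rwa [show j + 1 + n = j + (n + 1) by omega]
    refine ⟨p, ⟨?_, h2', h3⟩, rfl⟩
    by_contra hh
    exact h ⟨by omega, h2', h3⟩

def Top (C : List ℕ) : Prop := ∃ L M, C = L ++ [M] ∧ ∀ x ∈ L, x < M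

theorem ce_rec2a (r j : ℕ) : ce (r + 1) j =
    (Ps (fun J C => EV J C ∧ ¬ Top C) 0 j (r + 1)).ncard + cv r j := by
  unfold ce cv
  refine card_split _ _ _ (fun p => (p.1, p.2 ++ [j + r])) (Ps_finite _ _ _ _) ?_ ?_ ?_ ?_
  · rintro p ⟨h1, h2, h3⟩
    exact ⟨h1, h2, h3.1⟩
  · rintro ⟨J, L⟩ ⟨h1, h2, h3⟩
    have hlt : ∀ x ∈ J ++ L, x < j + r := by
      intro x hx
      have := h2.mem_iff.1 hx
      simp at this; omega
    refine ⟨⟨h1, ?_, ?_⟩, ?_⟩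
    · have h4 : range' 0 (j + (r + 1)) = range' 0 (j + r) ++ [j + r] := by
        rw [← Nat.add_assoc, List.range'_concat]; simp
      rw [h4]
      simpa [List.append_assoc] using h2.append_right [j + r]
    · exact (top_iff hlt).2 h3
    · rintro ⟨-, -, -, hT⟩
      exact hT ⟨L, j + r, rfl, fun x hx => hlt x (by simp [hx])⟩
  · rintro ⟨J, L⟩ _ ⟨J', L'⟩ _ h
    simpa using h
  · rintro ⟨J, C⟩ ⟨h1, h2, h3⟩ hn
    have hT : Top C := by
      by_contra hT
      exact hn ⟨h1, h2, h3, hT⟩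
    obtain ⟨L, M, rfl, hM⟩ := hT
    have hlt : ∀ x ∈ J ++ L, x < M := by
      intro x hx
      rcases List.mem_append.1 hx with hx | hx
      · obtain ⟨m, hm, hxm⟩ := h3.2.2.2.2 x hx
        rcases List.mem_append.1 hm with hm | hm
        · exact hxm.trans (hM m hm)
        · simp at hm; omega
      · exact hM x hx
    have hp : ([M] ++ (J ++ L)).Perm (J ++ (L ++ [M])) := by
      rw [← List.append_assoc J L]; exact List.perm_append_comm
    have h5 := perm_split (hp.trans h2) (by
      intro x hx y hy
      obtain rfl : x = M := by simpa using hx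
      exact hlt y hy)
    have hl := h2.length_eq
    have hl' : (J ++ L).length = j + r := by simp at hl ⊢; omega
    have hM' := single_perm h5.2
    rw [hl'] at h5 hM'
    obtain rfl : M = j + r := by omega
    exact ⟨(J, L), ⟨h1, h5.1, (top_iff hlt).1 h3⟩, rfl⟩

theorem ce_rec2 (r j : ℕ) : ce (r + 1) j = cv r j +
    ∑ p ∈ antidiagonal r, cf (p.1 + 1) * ct p.2 j := by
  rw [ce_rec2a, add_comm]
  congr 1
  rw [card_decomp _ (antidiagonal r)
    (fun p => Ls PA (j + p.2) (p.1 + 1) ×ˢ Ts j p.2)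
    (fun b => (b.2.1.take j, b.2.1.drop j ++ b.1 ++ b.2.2))
    (fun b => (b.1.length - 1, b.2.1.length + b.2.2.length - j))]
  · refine Finset.sum_congr rfl fun p _ => ?_
    rw [Set.ncard_prod, Ls_shift PA PA_map]; rfl
  · intro i _
    exact (Ls_finite _ _ _).prod (Ts_finite _ _)
  · rintro ⟨p, q⟩ _ ⟨P, K, C⟩ ⟨⟨h1, _⟩, ⟨h2, h3, _⟩⟩
    have h1 := h1.length_eq
    have h3 := h3.length_eq
    simp at h1 h2 h3 ⊢
    omega
  · rintro ⟨p, q⟩ hpq ⟨P, K, C⟩ ⟨⟨h1, h1'⟩, ⟨h2, h3, h3'⟩⟩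
    rw [mem_antidiagonal] at hpq
    simp only at h1 h1' h2 h3 h3' hpq ⊢
    have hKe : K.take j ++ K.drop j = K := List.take_append_drop j K
    have hlt : (K.take j).length = j := by simp; omega
    have hI0 : K.drop j ≠ [] := by simp; omega
    generalize K.take j = J at *
    generalize K.drop j = I at *
    subst hKe
    have hnd : (J ++ I ++ C).Nodup := h3.nodup_iff.2 List.nodup_range'
    have hE := iii_mk h3' h1' hI0 (by rintro rfl; simpa using h1.length_eq)
      (fun x hx hx' => (List.nodup_append.1 hnd).2.2 x hx x hx' rfl)
      (abv_of_range h3 (by simpa using h1))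
    refine ⟨hlt, ?_, hE⟩
    have := perm_join h3 (by simpa using h1)
    rw [show p + 1 + (j + q) = j + (r + 1) by omega] at this
    refine List.Perm.trans ?_ this
    have e1 : J ++ (I ++ P ++ C) = (J ++ I) ++ (P ++ C) := by simp
    have e2 : P ++ (J ++ I ++ C) = (P ++ (J ++ I)) ++ C := by simp
    rw [e1, e2, ← List.append_assoc]
    exact List.perm_append_comm.append_right C
  · rintro ⟨p, q⟩ hpq ⟨P, K, C⟩ ⟨⟨h1, h1'⟩, ⟨h2, h3, h3'⟩⟩ ⟨p', q'⟩ hpq' ⟨P', K', C'⟩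
      ⟨⟨g1, g1'⟩, ⟨g2, g3, g3'⟩⟩ h
    simp only [Prod.mk.injEq] at h1 h1' h2 h3 h3' g1 g1' g2 g3 g3' h
    have hKe : K.take j ++ K.drop j = K := List.take_append_drop j K
    have hKe' : K'.take j ++ K'.drop j = K' := List.take_append_drop j K'
    rw [h.1] at hKe h
    generalize K'.take j = J at *
    generalize K'.drop j = I' at *
    generalize K.drop j = I at *
    subst hKe
    subst hKe'
    have := iii_unique h.2 h3' g3' (by rintro rfl; simpa using h1.length_eq)
      (by rintro rfl; simpa using g1.length_eq)
      (abv_of_range h3 (by simpa using h1)) (abv_of_range g3 (by simpa using g1))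
    rw [this.1, this.2.1, this.2.2]
  · rintro ⟨J, C⟩ ⟨h1, h2, h3, h4⟩
    simp only at h1 h2 h3 h4
    obtain ⟨I, P, C', rfl, hI, hP, hab, hE, hPA⟩ :=
      iii_exists h3 (h2.nodup_iff.2 List.nodup_range') h4
    have hp : (P ++ (J ++ I ++ C')).Perm (J ++ (I ++ P ++ C')) := by
      have e1 : J ++ (I ++ P ++ C') = (J ++ I) ++ (P ++ C') := by simp
      have e2 : P ++ (J ++ I ++ C') = (P ++ (J ++ I)) ++ C' := by simp
      rw [e1, e2, ← List.append_assoc (J ++ I)]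
      exact List.perm_append_comm.append_right C'
    have h5 := perm_split (hp.trans h2) hab
    have hl := h2.length_eq
    have hP1 := List.length_pos_iff.2 hP
    have hI1 := List.length_pos_iff.2 hI
    simp only [List.length_append, List.length_range'] at hl
    have e3 : (J ++ I ++ C').length = j + (I.length + C'.length) := by simp; omega
    rw [e3] at h5
    refine ⟨(P, J ++ I, C'), (P.length - 1, I.length + C'.length), ?_, ⟨⟨?_, hPA⟩, ⟨?_, h5.1, hE⟩⟩, ?_⟩
    · rw [mem_antidiagonal]; simp only; omega
    · simp only [Nat.sub_add_cancel hP1]; simpa using h5.2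
    · simp; omega
    · simp [← h1]

end WilfProof

namespace WilfProof
open List (Perm range')
open Finset.HasAntidiagonal (antidiagonal mem_antidiagonal)

/-- the cut case -/
def Cut (J L : List ℕ) : Prop := ∃ a J' X Y, J = a :: J' ∧ L = X ++ Y ∧ (∀ y ∈ Y, y < a) ∧
  (∀ x ∈ X, a < x)

theorem cut_perm {a : ℕ} {J X Y : List ℕ} : (J ++ X ++ ([a] ++ Y)).Perm (a :: J ++ (X ++ Y)) := by
  have e1 : J ++ X ++ ([a] ++ Y) = (J ++ X ++ [a]) ++ Y := by simp
  have e2 : a :: J ++ (X ++ Y) = ([a] ++ (J ++ X)) ++ Y := by simp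
  rw [e1, e2]
  exact List.perm_append_comm.append_right Y

theorem cv_cut (r j : ℕ) : (Ps (fun J L => VP J L ∧ Cut J L) 0 (j + 1) r).ncard =
    ∑ p ∈ antidiagonal r, cv p.1 j * cf p.2 := by
  rw [card_decomp _ (antidiagonal r)
    (fun p => Ps VP (p.2 + 1) j p.1 ×ˢ Ls PA 0 p.2)
    (fun b => (b.2.length :: b.1.1, b.1.2 ++ b.2))
    (fun b => (b.1.2.length, b.2.length))]
  · refine Finset.sum_congr rfl fun p _ => ?_
    rw [Set.ncard_prod, Ps_shift VP VP_map]; rfl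
  · intro i _
    exact (Ps_finite _ _ _ _).prod (Ls_finite _ _ _)
  · rintro ⟨p, q⟩ _ ⟨⟨J, X⟩, Y⟩ ⟨⟨h1, h2, _⟩, ⟨h3, _⟩⟩
    have h2 := h2.length_eq
    have h3 := h3.length_eq
    simp at h1 h2 h3 ⊢
    omega
  · rintro ⟨p, q⟩ hpq ⟨⟨J, X⟩, Y⟩ ⟨⟨h1, h2, h2'⟩, ⟨h3, h3'⟩⟩
    rw [mem_antidiagonal] at hpq
    simp only at h1 h2 h2' h3 h3' hpq ⊢
    have hl : Y.length = q := by simpa using h3.length_eq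
    rw [hl]
    have k1 : ∀ y ∈ Y, y < q := fun y hy => by simpa using h3.mem_iff.1 hy
    have k2 : ∀ x ∈ J ++ X, q < x := fun y hy => by
      have := h2.mem_iff.1 hy
      simp at this; omega
    have k3 : ∀ x ∈ X, q < x := fun x hx => k2 x (by simp [hx])
    have k4 : ∀ x ∈ J, q < x := fun x hx => k2 x (by simp [hx])
    refine ⟨by simpa using h1, ?_, vp_cut_mk h2' h3' k1 k3 k4, q, J, X, Y, rfl, rfl, k1, k3⟩
    have hb : ([q] ++ Y).Perm (range' 0 (1 + q)) := perm_join h3 (by simp)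
    have := perm_join (X := J ++ X) (a := j + p) hb (by simpa [Nat.add_comm] using h2)
    refine cut_perm.symm.trans (this.trans ?_)
    rw [show j + p + (1 + q) = j + 1 + r by omega]
  · rintro ⟨p, q⟩ hpq ⟨⟨J, X⟩, Y⟩ ⟨⟨h1, h2, h2'⟩, ⟨h3, h3'⟩⟩ ⟨p', q'⟩ hpq' ⟨⟨J', X'⟩, Y'⟩
      ⟨⟨g1, g2, g2'⟩, ⟨g3, g3'⟩⟩ h
    simp only [Prod.mk.injEq, List.cons.injEq] at h1 h2 h2' h3 h3' g1 g2 g2' g3 g3' h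
    have := List.append_inj' h.2 h.1.1
    rw [h.1.2, this.1, this.2]
  · rintro ⟨J, L⟩ ⟨h1, h2, h3, a, J, X, Y, rfl, rfl, hY, hX⟩
    simp only at h1 h2 h3
    have hJ := (List.pairwise_cons.1 h3.1).1
    have h5 := perm_split (cut_perm.trans h2) (by
      intro x hx y hy
      have h6 : a < x := by
        rcases List.mem_append.1 hx with hx | hx
        · exact hJ x hx
        · exact hX x hx
      rcases List.mem_append.1 hy with hy | hy
      · simp at hy; omega
      · have := hY y hy; omega)
    have h6 := perm_split h5.1 (by
      intro x hx y hy
      obtain rfl : x = a := by simpa using hx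
      exact hY y hy)
    have ha := single_perm h6.2
    obtain rfl : a = Y.length := by omega
    have hl := h2.length_eq
    simp at hl h1
    have hv := vp_cut h3
    refine ⟨((J, X), Y), (X.length, Y.length), ?_, ⟨⟨h1, ?_, hv.1⟩, ⟨h6.1, hv.2⟩⟩, rfl⟩
    · rw [mem_antidiagonal]; simp only; omega
    · have := h5.2
      simp only [List.length_append, List.length_singleton, h1] at this
      simpa [Nat.add_comm] using this

theorem int_perm {J B0 C B1 : List ℕ} : (B0 ++ ((J ++ C) ++ B1)).Perm (J ++ (B0 ++ C ++ B1)) := by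
  have e1 : B0 ++ ((J ++ C) ++ B1) = (B0 ++ J) ++ (C ++ B1) := by simp
  have e2 : J ++ (B0 ++ C ++ B1) = (J ++ B0) ++ (C ++ B1) := by simp
  rw [e1, e2]
  exact List.perm_append_comm.append_right _

theorem cv_int (r j : ℕ) : (Ps (fun J L => VP J L ∧ ¬ Cut J L) 0 (j + 1) r).ncard =
    ∑ p ∈ antidiagonal r, cf p.1 * ∑ q ∈ antidiagonal p.2, ck q.1 (j + 1) * cf q.2 := by
  rw [card_decomp _ ((antidiagonal r).sigma (fun p => antidiagonal p.2))
    (fun p => Ls PA (j + 1 + p.1.2) p.1.1 ×ˢ (Ps KV p.2.2 (j + 1) p.2.1 ×ˢ Ls PA 0 p.2.2))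
    (fun b => (b.2.1.1, b.1 ++ b.2.1.2 ++ b.2.2))
    (fun b => ⟨(b.1.length, b.2.1.2.length + b.2.2.length), (b.2.1.2.length, b.2.2.length)⟩)]
  · rw [Finset.sum_sigma]
    refine Finset.sum_congr rfl fun p _ => ?_
    rw [Finset.mul_sum]
    refine Finset.sum_congr rfl fun q _ => ?_
    simp only [Set.ncard_prod]
    rw [Ps_shift KV KV_map, Ls_shift PA PA_map]; rfl
  · intro i _
    exact (Ls_finite _ _ _).prod ((Ps_finite _ _ _ _).prod (Ls_finite _ _ _))
  · rintro ⟨⟨p, m⟩, ⟨c, q⟩⟩ hpq ⟨B0, ⟨J, C⟩, B1⟩ ⟨⟨h0, _⟩, ⟨h1, h2, _⟩, ⟨h3, _⟩⟩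
    rw [Finset.mem_sigma, mem_antidiagonal, mem_antidiagonal] at hpq
    have h0 := h0.length_eq
    have h2 := h2.length_eq
    have h3 := h3.length_eq
    simp at h0 h1 h2 h3 hpq ⊢
    omega
  · rintro ⟨⟨p, m⟩, ⟨c, q⟩⟩ hpq ⟨B0, ⟨J, C⟩, B1⟩ ⟨⟨h0, h0'⟩, ⟨h1, h2, h2'⟩, ⟨h3, h3'⟩⟩
    rw [Finset.mem_sigma, mem_antidiagonal, mem_antidiagonal] at hpq
    simp only at h0 h0' h1 h2 h2' h3 h3' hpq ⊢
    have hab := abv_of_range h3 (by simpa using h2)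
    have hj := perm_join h3 (by simpa using h2)
    rw [show j + 1 + c + q = j + 1 + m by omega] at hj
    have hab2 := abv_of_range hj (by simpa using h0)
    have hj2 := perm_join hj (by simpa using h0)
    rw [show p + (j + 1 + m) = j + 1 + r by omega] at hj2
    rw [abv_append_right] at hab2
    refine ⟨h1, int_perm.symm.trans hj2, ?_, ?_⟩
    · exact vp_int_mk h2'.1 (h2.nodup_iff.2 List.nodup_range') h0' h3' hab2.1 hab hab2.2
    · rintro ⟨a, J', X, Y, rfl, hXY, hY, hX⟩
      obtain ⟨hE, d, hd, hda⟩ := h2'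
      exact vp_disjoint hXY.symm hY hX hE ⟨d, hd, hda a (by simp)⟩ hab2.1 hab
  · rintro ⟨⟨p, m⟩, ⟨c, q⟩⟩ hpq ⟨B0, ⟨J, C⟩, B1⟩ ⟨⟨h0, h0'⟩, ⟨h1, h2, h2'⟩, ⟨h3, h3'⟩⟩
      ⟨⟨p', m'⟩, ⟨c', q'⟩⟩ hpq' ⟨B0', ⟨J', C'⟩, B1'⟩ ⟨⟨g0, g0'⟩, ⟨g1, g2, g2'⟩, ⟨g3, g3'⟩⟩ h
    rw [Finset.mem_sigma, mem_antidiagonal, mem_antidiagonal] at hpq hpq'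
    simp only [Prod.mk.injEq] at h0 h0' h1 h2 h2' h3 h3' hpq g0 g0' g1 g2 g2' g3 g3' hpq' h
    obtain ⟨rfl, h⟩ := h
    obtain ⟨a, J, rfl⟩ := List.exists_cons_of_length_eq_add_one h1
    have hab := abv_of_range h3 (by simpa using h2)
    have hj := perm_join h3 (by simpa using h2)
    rw [show j + 1 + c + q = j + 1 + m by omega] at hj
    have hab2 := abv_of_range hj (by simpa using h0)
    rw [abv_append_right] at hab2
    have gab := abv_of_range g3 (by simpa using g2)
    have gj := perm_join g3 (by simpa using g2)
    rw [show j + 1 + c' + q' = j + 1 + m' by omega] at gj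
    have gab2 := abv_of_range gj (by simpa using g0)
    rw [abv_append_right] at gab2
    have := int_unique h h2'.1 hab2.1 hab hab2.2 g2'.1 gab2.1 gab gab2.2
    rw [this.1, this.2.1, this.2.2]
  · rintro ⟨J, L⟩ ⟨h1, h2, h3, hn⟩
    simp only at h1 h2 h3 hn
    obtain ⟨a, J, rfl⟩ := List.exists_cons_of_length_eq_add_one h1
    rcases vp_exists h3 (h2.nodup_iff.2 List.nodup_range') with ⟨X, Y, rfl, hY, hX⟩ |
      ⟨B0, C, B1, rfl, hE, ⟨c, hc, hca⟩, hB0, hB1, a1, a2, a3⟩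
    · exact (hn ⟨a, J, X, Y, rfl, rfl, hY, hX⟩).elim
    have h5 := perm_split (int_perm.trans h2) (abv_append_right.2 ⟨a1, a3⟩)
    have h6 := perm_split h5.1 a2
    have hl := h2.length_eq
    simp only [List.length_append, List.length_range', h1] at hl
    have e1 : (a :: J ++ C).length = j + 1 + C.length := by rw [List.length_append, h1]
    have e2 : (a :: J ++ C ++ B1).length = j + 1 + (C.length + B1.length) := by
      rw [List.length_append, e1]; omega
    rw [e1] at h6
    rw [e2] at h5
    refine ⟨(B0, (a :: J, C), B1), ⟨(B0.length, C.length + B1.length), (C.length, B1.length)⟩, ?_,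
      ⟨⟨by simpa using h5.2, hB0⟩, ⟨h1, by simpa using h6.2, hE, c, hc, ?_⟩, ⟨h6.1, hB1⟩⟩, rfl⟩
    · rw [Finset.mem_sigma, mem_antidiagonal, mem_antidiagonal]; simp at hl ⊢; omega
    · have hJ := (List.pairwise_cons.1 h3.1).1
      intro x hx
      rcases List.mem_cons.1 hx with rfl | hx
      · exact hca
      · exact hca.trans (hJ x hx)

theorem cv_succ (r j : ℕ) : cv r (j + 1) = ∑ p ∈ antidiagonal r, cv p.1 j * cf p.2 +
    ∑ p ∈ antidiagonal r, cf p.1 * ∑ q ∈ antidiagonal p.2, ck q.1 (j + 1) * cf q.2 := by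
  rw [← cv_cut, ← cv_int]
  unfold cv
  refine card_split _ _ _ id (Ps_finite _ _ _ _) ?_ ?_ ?_ ?_
  · rintro p ⟨h1, h2, h3⟩
    exact ⟨h1, h2, h3.1⟩
  · rintro p ⟨h1, h2, h3⟩
    exact ⟨⟨h1, h2, h3.1⟩, fun h => h3.2 h.2.2.2⟩
  · exact fun _ _ _ _ h => h
  · rintro p ⟨h1, h2, h3⟩ hn
    exact ⟨p, ⟨h1, h2, h3, fun hc => hn ⟨h1, h2, h3, hc⟩⟩, rfl⟩

end WilfProof

namespace WilfProof
open List (Perm range')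
open Finset.HasAntidiagonal (antidiagonal mem_antidiagonal)

theorem pred_split_gen (R : ℕ → ℕ → Prop) (htot : ∀ a b, a ≠ b → R a b ∨ R b a)
    (v : ℕ) (Y : List ℕ) (hv : v ∉ Y)
    (h : ∀ c d, Bef Y c d → R c v → ¬ R v d) :
    ∃ X' Y', Y = X' ++ Y' ∧ (∀ y ∈ Y', R y v) ∧ (∀ x ∈ X', R v x) := by
  induction Y with
  | nil => exact ⟨[], [], rfl, by simp, by simp⟩
  | cons x Y ih =>
    simp only [List.mem_cons, not_or] at hv
    by_cases hx : R x v
    · refine ⟨[], x :: Y, rfl, ?_, by simp⟩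
      intro y hy
      rcases List.mem_cons.1 hy with rfl | hy
      · exact hx
      · have hne : y ≠ v := by rintro rfl; exact hv.2 hy
        exact (htot y v hne).resolve_right (h x y ((bef_cons _ _ _ _).2 (Or.inr ⟨rfl, hy⟩)) hx)
    · obtain ⟨X', Y', rfl, h1, h2⟩ := ih hv.2
        (fun c d hcd => h c d ((bef_cons _ _ _ _).2 (Or.inl hcd)))
      refine ⟨x :: X', Y', rfl, h1, ?_⟩
      intro y hy
      rcases List.mem_cons.1 hy with rfl | hy
      · exact (htot v y hv.1).resolve_right hx
      · exact h2 y hy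

theorem dec_cons_gen (R : ℕ → ℕ → Prop) (hirr : ∀ a, ¬ R a a)
    (htr : ∀ a b c, R a b → R b c → R a c)
    (htot : ∀ a b, a ≠ b → R a b ∨ R b a) (v : ℕ) (X Y : List ℕ) (hv : v ∉ X ++ Y) (hX : X ≠ [])
    (hY : Y ≠ []) (hab : ∀ x ∈ X, ∀ y ∈ Y, R y x)
    (hS : ∀ a b c d, Bef (v :: (X ++ Y)) a b → Bef (v :: (X ++ Y)) b c → Bef (v :: (X ++ Y)) c d →
      R c a → R a d → R d b → False) :
    (∃ X' Y', v :: (X ++ Y) = X' ++ Y' ∧ X' ≠ [] ∧ Y' ≠ [] ∧ ∀ x ∈ X', ∀ y ∈ Y', R y x) ∨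
    (∃ X' Y', v :: (X ++ Y) = X' ++ Y' ∧ X' ≠ [] ∧ Y' ≠ [] ∧ ∀ x ∈ X', ∀ y ∈ Y', R x y) := by
  have hvX : v ∉ X := fun h => hv (by simp [h])
  have hvY : v ∉ Y := fun h => hv (by simp [h])
  obtain ⟨x0, hx0⟩ := List.exists_mem_of_ne_nil X hX
  by_cases h1 : ∀ y ∈ Y, R y v
  · exact Or.inl ⟨v :: X, Y, rfl, by simp, hY, by grind⟩
  by_cases h2 : ∀ z ∈ X ++ Y, R v z
  · exact Or.inr ⟨[v], X ++ Y, rfl, by simp, by simp [hX], by simpa using h2⟩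
  push Not at h1 h2
  obtain ⟨y, hy, hyv⟩ := h1
  obtain ⟨z, hz, hzv⟩ := h2
  have hyv' : R v y := (htot v y (by rintro rfl; exact hvY hy)).resolve_right hyv
  have hzv' : R z v := (htot z v (by rintro rfl; exact hv hz)).resolve_right hzv
  have hzY : z ∈ Y := by
    rcases List.mem_append.1 hz with h | h
    · exact (hyv (htr _ _ _ (hab z h y hy) hzv')).elim
    · exact h
  obtain ⟨X', Y', rfl, k1, k2⟩ := pred_split_gen R htot v Y hvY (by
    intro c d hcd hc hd
    refine hS v x0 c d ?_ ?_ ?_ hc hd (hab x0 hx0 d hcd.right)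
    · simp [bef_cons, hx0]
    · simp [bef_cons, bef_append, hx0, hcd.left]
    · simp only [bef_cons, bef_append, hcd]; simp)
  refine Or.inl ⟨v :: (X ++ X'), Y', by simp, by simp, ?_, ?_⟩
  · rintro rfl
    simp only [List.append_nil] at hzY
    exact hirr _ (htr _ _ _ hzv' (k2 z hzY))
  · intro x hx y hy
    rcases List.mem_cons.1 hx with rfl | hx
    · exact k1 y hy
    rcases List.mem_append.1 hx with hx | hx
    · exact hab x hx y (by simp [hy])
    · exact htr _ _ _ (k1 y hy) (k2 x hx)

def SkD (l : List ℕ) : Prop := ∃ X Y, l = X ++ Y ∧ X ≠ [] ∧ Y ≠ [] ∧ Abv X Y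
def SuD (l : List ℕ) : Prop := ∃ X Y, l = X ++ Y ∧ X ≠ [] ∧ Y ≠ [] ∧ Abv Y X

theorem sep_dec (l : List ℕ) (hl : 2 ≤ l.length) (hnd : l.Nodup) (h : SEP l) : SkD l ∨ SuD l := by
  induction l with
  | nil => simp at hl
  | cons v l ih =>
    have hv := (List.nodup_cons.1 hnd)
    by_cases h1 : l.length = 1
    · obtain ⟨w, rfl⟩ := List.length_eq_one_iff.1 h1
      have hne : v ≠ w := by simpa using hv.1
      rcases lt_or_gt_of_ne hne with h2 | h2
      · exact Or.inr ⟨[v], [w], rfl, by simp, by simp, by simpa [Abv] using h2⟩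
      · exact Or.inl ⟨[v], [w], rfl, by simp, by simp, by simpa [Abv] using h2⟩
    · rcases ih (by simp at hl; omega) hv.2 (h.mono (by simp)) with
        ⟨X, Y, rfl, hX, hY, hab⟩ | ⟨X, Y, rfl, hX, hY, hab⟩
      · rcases dec_cons_gen (fun a b => a < b) (by simp) (by intros; omega) (by intros; omega) v X Y
          hv.1 hX hY hab (fun a b c d k1 k2 k3 g1 g2 g3 => (h a b c d k1 k2 k3).1 ⟨g1, g2, g3⟩) with
          ⟨X', Y', e, hX', hY', hh⟩ | ⟨X', Y', e, hX', hY', hh⟩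
        · exact Or.inl ⟨X', Y', e, hX', hY', hh⟩
        · exact Or.inr ⟨X', Y', e, hX', hY', fun y hy x hx => hh x hx y hy⟩
      · rcases dec_cons_gen (fun a b => b < a) (by simp) (by intros; omega) (by intros; omega) v X Y
          hv.1 hX hY (fun x hx y hy => hab y hy x hx)
          (fun a b c d k1 k2 k3 g1 g2 g3 => (h a b c d k1 k2 k3).2 ⟨g3, g2, g1⟩) with
          ⟨X', Y', e, hX', hY', hh⟩ | ⟨X', Y', e, hX', hY', hh⟩
        · exact Or.inr ⟨X', Y', e, hX', hY', fun y hy x hx => hh x hx y hy⟩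
        · exact Or.inl ⟨X', Y', e, hX', hY', hh⟩

theorem dec_excl (l : List ℕ) (h1 : SkD l) (h2 : SuD l) : False := by
  obtain ⟨X, Y, rfl, hX, hY, hab⟩ := h1
  obtain ⟨X', Y', e, hX', hY', hab'⟩ := h2
  unfold Abv at *
  obtain ⟨x, hx⟩ := List.exists_mem_of_ne_nil X hX
  obtain ⟨x', hx'⟩ := List.exists_mem_of_ne_nil X' hX'
  obtain ⟨y, hy⟩ := List.exists_mem_of_ne_nil Y hY
  obtain ⟨y', hy'⟩ := List.exists_mem_of_ne_nil Y' hY'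
  rcases append_eq_cases e with ⟨Z, rfl, rfl⟩ | ⟨Z, rfl, rfl⟩
  · have := hab x hx y' (by simp [hy'])
    have := hab' y' hy' x (by simp [hx])
    omega
  · have := hab x' (by simp [hx']) y hy
    have := hab' y (by simp [hy]) x' hx'
    omega

theorem SEP.reverse {l : List ℕ} (h : SEP l) : SEP l.reverse := by
  intro a b c d k1 k2 k3
  rw [bef_reverse] at k1 k2 k3
  have := h d c b a k3 k2 k1
  tauto

theorem cs_rec (n : ℕ) (hn : 2 ≤ n) : cb n = 2 * cs n := by
  have hiff : ∀ l ∈ Ls SEP 0 n, (SI l ↔ SuD l) := by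
    rintro l ⟨h1, h2⟩
    have hl : l.length = n := by simpa using h1.length_eq
    have hnd : l.Nodup := h1.nodup_iff.2 List.nodup_range'
    constructor
    · intro hs
      refine (sep_dec l (by omega) hnd h2).resolve_left ?_
      rintro ⟨X, Y, rfl, hX, hY, hab⟩
      exact hs.2 X Y rfl hX hY hab
    · intro hs
      refine ⟨by rintro rfl; simp at hl; omega, ?_⟩
      intro X Y e hX hY hab
      exact dec_excl l ⟨X, Y, e, hX, hY, hab⟩ hs
  unfold cb cs
  rw [two_mul]
  refine card_split _ _ _ List.reverse (Ls_finite _ _ _) ?_ ?_ ?_ ?_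
  · rintro l ⟨h1, h2⟩
    exact ⟨h1, h2.2⟩
  · rintro l ⟨h1, h2, h3⟩
    obtain ⟨X, Y, rfl, hX, hY, hab⟩ := (hiff l ⟨h1, h3⟩).1 h2
    refine ⟨⟨(List.reverse_perm _).trans h1, h3.reverse⟩, ?_⟩
    rintro ⟨-, hs, -⟩
    refine hs.2 Y.reverse X.reverse (by simp) (by simpa using hY) (by simpa using hX) ?_
    simpa [Abv] using hab
  · exact fun a _ b _ h => List.reverse_injective h
  · rintro l ⟨h1, h2⟩ hn'
    have hs : ¬ SI l := fun hs => hn' ⟨h1, hs, h2⟩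
    have hnd : l.Nodup := h1.nodup_iff.2 List.nodup_range'
    have hl : l.length = n := by simpa using h1.length_eq
    obtain ⟨X, Y, rfl, hX, hY, hab⟩ := (sep_dec l (by omega) hnd h2).resolve_right
      (fun h => hs ((hiff l ⟨h1, h2⟩).2 h))
    have h4 : (X ++ Y).reverse ∈ Ls SEP 0 n := ⟨(List.reverse_perm _).trans h1, h2.reverse⟩
    refine ⟨(X ++ Y).reverse, ⟨h4.1, (hiff _ h4).2 ?_, h4.2⟩, by simp⟩
    refine ⟨Y.reverse, X.reverse, by simp, by simpa using hY, by simpa using hX, ?_⟩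
    simpa [Abv] using hab

theorem cs_zero : cs 0 = 0 := by
  unfold cs
  rw [Set.ncard_eq_zero (Ls_finite _ _ _)]
  ext l
  simp only [Ls, Set.mem_setOf_eq, Set.mem_empty_iff_false, iff_false, List.range'_zero,
    List.perm_nil]
  rintro ⟨rfl, h, -⟩
  exact h.1 rfl

theorem cb_one : cb 1 = 1 := by
  unfold cb
  rw [Set.ncard_eq_one]
  refine ⟨[0], ?_⟩
  ext l
  simp only [Ls, Set.mem_setOf_eq, Set.mem_singleton_iff, List.range'_one, List.perm_singleton]
  constructor
  · exact fun h => h.1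
  · rintro rfl
    exact ⟨rfl, fun _ _ _ _ h => (bef_single _ _ _ h).elim⟩

theorem cs_one : cs 1 = 1 := by
  have := cb_rec 1 (by norm_num)
  rw [Finset.Nat.antidiagonal_succ] at this
  simp [cb_zero, cb_one, cs_zero] at this
  exact this.symm

end WilfProof

namespace WilfProof
open PowerSeries
open Finset.HasAntidiagonal (antidiagonal mem_antidiagonal)

noncomputable def sB : PowerSeries ℚ := PowerSeries.mk fun n => (cb n : ℚ)
noncomputable def sK : PowerSeries ℚ := PowerSeries.mk fun n => (cs n : ℚ)
noncomputable def sU : PowerSeries ℚ := sB - 1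
noncomputable def sG : PowerSeries ℚ := (1 - sU)⁻¹

theorem sB_eq : sB = 1 + sB * sK := by
  ext n
  rcases Nat.eq_zero_or_pos n with rfl | hn
  · simp [sB, sK, PowerSeries.coeff_mul, cb_zero, cs_zero]
  · rw [map_add, PowerSeries.coeff_mul, PowerSeries.coeff_one, if_neg (by omega)]
    simp only [sB, sK, PowerSeries.coeff_mk]
    rw [cb_rec n hn]
    push_cast
    ring

theorem sK_eq : 2 * sK = sU + X := by
  ext n
  have h2 : (2 : PowerSeries ℚ) = PowerSeries.C 2 := (map_ofNat PowerSeries.C 2).symm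
  rw [h2, PowerSeries.coeff_C_mul]
  simp only [sU, sB, sK, map_add, map_sub, PowerSeries.coeff_mk, PowerSeries.coeff_one,
    PowerSeries.coeff_X]
  rcases n with _ | _ | n
  · simp [cs_zero, cb_zero]
  · simp [cs_one, cb_one]; norm_num
  · simp [cs_rec (n + 2) (by omega)]

theorem sU_zero : PowerSeries.coeff 0 sU = 0 := by
  simp [sU, sB, cb_zero]

theorem sG_eq : (1 - sU) * sG = 1 := by
  refine PowerSeries.mul_inv_cancel _ ?_
  have := sU_zero
  rw [PowerSeries.coeff_zero_eq_constantCoeff_apply] at this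
  simp [this]

theorem sB_U : sB = 1 + sU := by simp [sU]

theorem sU_K : sU = (1 + sU) * sK := by
  have := sB_eq
  rw [← sB_U]
  linear_combination this - sB_U

theorem sXU : X * (1 + sU) = sU - sU ^ 2 := by
  linear_combination (-1 - sU) * sK_eq - 2 * sU_K

theorem sU_ne : 1 + sU ≠ 0 := by
  intro h
  have := congrArg (PowerSeries.coeff 0) h
  rw [map_add, sU_zero] at this
  simp at this

theorem sXG : X * sG = sK := by
  refine mul_left_cancel₀ sU_ne ?_
  linear_combination sG * sXU + sU * sG_eq + sU_K

theorem hat_T (j : ℕ) : sU * sK * sG ^ j =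
    X * (sK * sG ^ (j + 1) + sU * sK * sG ^ (j + 1)) := by
  linear_combination (-sK * sG ^ j * (1 + sU)) * sXG + sK * sG ^ j * sU_K

theorem hat_E (j : ℕ) : sK * sG ^ j = X * (sB * sG ^ j) + sU * (sU * sK * sG ^ j) := by
  have h : sK * (1 - sU) = X := by
    rw [← sXG]; linear_combination X * sG_eq
  rw [sB_U]
  linear_combination (1 + sU) * sG ^ j * h

theorem hat_V (j : ℕ) : sB * sG ^ (j + 1) = sB * sG ^ j * sB +
    sB * ((sK * sG ^ (j + 1) - sK * sG ^ j) * sB) := by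
  rw [sB_U]
  linear_combination (1 + sU) * sG ^ j * (sG_eq + (sG - 1) * sU_K)

theorem main_coeff (n : ℕ) : (cf n : ℚ) = coeff n sB ∧
    ∀ j, (ce n j : ℚ) = coeff n (sK * sG ^ j) ∧ (cv n j : ℚ) = coeff n (sB * sG ^ j) ∧
      (ct n j : ℚ) = coeff n (sU * sK * sG ^ j) := by
  induction n using Nat.strong_induction_on with
  | _ n ih =>
  have hf : ∀ m < n, (cf m : ℚ) = coeff m sB := fun m hm => (ih m hm).1
  have he : ∀ m < n, ∀ j, (ce m j : ℚ) = coeff m (sK * sG ^ j) := fun m hm j => ((ih m hm).2 j).1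
  have hv : ∀ m < n, ∀ j, (cv m j : ℚ) = coeff m (sB * sG ^ j) := fun m hm j => ((ih m hm).2 j).2.1
  have ht : ∀ m < n, ∀ j, (ct m j : ℚ) = coeff m (sU * sK * sG ^ j) :=
    fun m hm j => ((ih m hm).2 j).2.2
  have hK0 : coeff 0 sK = 0 := by simp [sK, cs_zero]
  have hU0 := sU_zero
  rw [coeff_zero_eq_constantCoeff_apply] at hK0 hU0
  -- T
  have ht' : ∀ j, (ct n j : ℚ) = coeff n (sU * sK * sG ^ j) := by
    intro j
    rcases n with _ | n
    · simp [ct_zero, hU0]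
    · rw [ct_succ, hat_T, coeff_succ_X_mul, map_add, Nat.cast_add, he n (by omega),
        ht n (by omega)]
  -- E
  have he' : ∀ j, (ce n j : ℚ) = coeff n (sK * sG ^ j) := by
    intro j
    rcases n with _ | n
    · simp [ce_zero, hK0]
    · rw [ce_rec2, hat_E, map_add, coeff_succ_X_mul, coeff_mul _ sU, Nat.cast_add, hv n (by omega),
        Finset.Nat.antidiagonal_succ, Finset.sum_cons, sU_zero, zero_mul, zero_add,
        Finset.sum_map]
      congr 1
      rw [Nat.cast_sum]
      refine Finset.sum_congr rfl ?_
      rintro ⟨p, q⟩ hpq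
      rw [mem_antidiagonal] at hpq
      simp only at hpq
      simp only [Nat.cast_mul, Function.Embedding.prodMap, Function.Embedding.coeFn_mk,
        Prod.map, Function.Embedding.refl_apply]
      rw [ht q (by omega)]
      rcases Nat.eq_zero_or_pos q with rfl | hq
      · simp [hU0]
      · rw [hf (p + 1) (by omega)]
        simp [sU, coeff_one]
  -- F
  have hf' : (cf n : ℚ) = coeff n sB := by
    rcases Nat.eq_zero_or_pos n with rfl | hn
    · simp [cf_zero, sB, cb_zero]
    · rw [cf_rec n hn, sB_eq, map_add, coeff_one, if_neg (by omega), zero_add, coeff_mul,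
        Nat.cast_sum]
      refine Finset.sum_congr rfl ?_
      rintro ⟨p, q⟩ hpq
      rw [mem_antidiagonal] at hpq
      simp only at hpq
      simp only [Nat.cast_mul]
      rcases Nat.eq_zero_or_pos q with rfl | hq
      · simp [ce_zero, hK0]
      · rw [hf p (by omega)]
        congr 1
        rcases Nat.lt_or_ge q n with h | h
        · rw [he q h]; simp
        · obtain rfl : q = n := by omega
          rw [he']; simp
  have hf2 : ∀ m ≤ n, (cf m : ℚ) = coeff m sB := fun m hm => by
    rcases Nat.lt_or_ge m n with h | h
    · exact hf m h
    · obtain rfl : m = n := by omega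
      exact hf'
  have he2 : ∀ m ≤ n, ∀ j, (ce m j : ℚ) = coeff m (sK * sG ^ j) := fun m hm => by
    rcases Nat.lt_or_ge m n with h | h
    · exact he m h
    · obtain rfl : m = n := by omega
      exact he'
  have hk2 : ∀ m ≤ n, ∀ j, (ck m (j + 1) : ℚ) = coeff m (sK * sG ^ (j + 1) - sK * sG ^ j) := by
    intro m hm j
    rw [map_sub, ← he2 m hm, ← he2 m hm, ce_rec4]
    push_cast; ring
  have hv' : ∀ j, ∀ m ≤ n, (cv m j : ℚ) = coeff m (sB * sG ^ j) := by
    intro j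
    induction j with
    | zero => intro m hm; rw [cv_zero, hf2 m hm]; simp
    | succ j ihj =>
      intro m hm
      rw [cv_succ, hat_V, map_add, coeff_mul, coeff_mul, Nat.cast_add, Nat.cast_sum, Nat.cast_sum]
      congr 1
      · refine Finset.sum_congr rfl ?_
        rintro ⟨p, q⟩ hpq
        rw [mem_antidiagonal] at hpq
        simp only at hpq
        simp only [Nat.cast_mul]
        rw [ihj p (by omega), hf2 q (by omega)]
      · refine Finset.sum_congr rfl ?_
        rintro ⟨p, q⟩ hpq
        rw [mem_antidiagonal] at hpq
        simp only at hpq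
        simp only [Nat.cast_mul]
        rw [hf2 p (by omega), coeff_mul, Nat.cast_sum]
        congr 1
        refine Finset.sum_congr rfl ?_
        rintro ⟨c, b⟩ hcb
        rw [mem_antidiagonal] at hcb
        simp only at hcb
        simp only [Nat.cast_mul]
        rw [hf2 b (by omega), hk2 c (by omega)]
  exact ⟨hf', fun j => ⟨he' j, hv' j n le_rfl, ht' j⟩⟩

theorem cf_eq_cb (n : ℕ) : cf n = cb n := by
  have := (main_coeff n).1
  simp only [sB, coeff_mk] at this
  exact_mod_cast this

end WilfProof

namespace WilfProof
open List (range')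

def word {n : ℕ} (π : Equiv.Perm (Fin n)) : List ℕ := List.ofFn fun i => (π i : ℕ)

theorem bef_word {n : ℕ} (π : Equiv.Perm (Fin n)) (a b : ℕ) :
    Bef (word π) a b ↔ ∃ i j, i < j ∧ (π i : ℕ) = a ∧ (π j : ℕ) = b := by
  have h1 : (word π).Pairwise (fun x y => ¬ (x = a ∧ y = b)) ↔ ¬ Bef (word π) a b := by
    rw [List.pairwise_iff_forall_sublist]
    constructor
    · intro h hb
      exact h hb ⟨rfl, rfl⟩
    · rintro h x y hxy ⟨rfl, rfl⟩
      exact h hxy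
  rw [word, List.pairwise_ofFn, ← word] at h1
  rw [← not_iff_not, ← h1]
  push Not
  tauto

theorem bef_word' {n : ℕ} {π : Equiv.Perm (Fin n)} {i j : Fin n} (h : i < j) :
    Bef (word π) (π i) (π j) := (bef_word _ _ _).2 ⟨i, j, h, rfl, rfl⟩

theorem word_perm {n : ℕ} (π : Equiv.Perm (Fin n)) : (word π).Perm (range' 0 n) := by
  refine (List.perm_ext_iff_of_nodup ?_ List.nodup_range').2 ?_
  · exact List.nodup_ofFn.2 (fun i j h => π.injective (Fin.ext h))
  · intro a
    simp only [word, List.mem_ofFn, List.mem_range'_1, Nat.zero_le, true_and, Nat.zero_add]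
    constructor
    · rintro ⟨i, rfl⟩; exact (π i).2
    · intro h; exact ⟨π.symm ⟨a, h⟩, by simp⟩

theorem word_surj {n : ℕ} {l : List ℕ} (h : l.Perm (range' 0 n)) :
    ∃ π : Equiv.Perm (Fin n), word π = l := by
  have hl : l.length = n := by simpa using h.length_eq
  subst hl
  have hlt : ∀ i : Fin l.length, l.get i < l.length := fun i => by
    have := h.mem_iff.1 (List.get_mem l i)
    simpa using this
  have hnd : l.Nodup := h.nodup_iff.2 List.nodup_range'
  let f : Fin l.length → Fin l.length := fun i => ⟨l.get i, hlt i⟩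
  have hf : Function.Injective f := fun i j hij =>
    List.nodup_iff_injective_get.1 hnd (by simpa [f] using hij)
  refine ⟨Equiv.ofBijective f (Finite.injective_iff_bijective.1 hf), ?_⟩
  simp [word, f]

theorem contains4 {n : ℕ} (π : Equiv.Perm (Fin n)) (σ : Equiv.Perm (Fin 4)) (w : Fin 4 → Fin 4)
    (hw : ∀ i, σ (w i) = i) :
    Contains π σ ↔ ∃ f : Fin 4 → Fin n, f 0 < f 1 ∧ f 1 < f 2 ∧ f 2 < f 3 ∧
      π (f (w 0)) < π (f (w 1)) ∧ π (f (w 1)) < π (f (w 2)) ∧ π (f (w 2)) < π (f (w 3)) := by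
  constructor
  · rintro ⟨f, hf, h⟩
    refine ⟨f, hf (by decide), hf (by decide), hf (by decide), ?_, ?_, ?_⟩ <;>
      rw [← h, hw, hw] <;> decide
  · rintro ⟨f, h1, h2, h3, g1, g2, g3⟩
    have hm : StrictMono (fun i => π (f (w i))) := by
      rw [Fin.strictMono_iff_lt_succ]
      intro i
      fin_cases i
      · exact g1
      · exact g2
      · exact g3
    refine ⟨f, ?_, ?_⟩
    · rw [Fin.strictMono_iff_lt_succ]
      intro i
      fin_cases i
      · exact h1
      · exact h2
      · exact h3
    · intro a b
      have hw' : ∀ a, w (σ a) = a := fun a => σ.injective (hw _)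
      have := hm.lt_iff_lt (a := σ a) (b := σ b)
      simp only [hw'] at this
      exact this.symm

theorem contains6 {n : ℕ} (π : Equiv.Perm (Fin n)) (σ : Equiv.Perm (Fin 6)) (w : Fin 6 → Fin 6)
    (hw : ∀ i, σ (w i) = i) :
    Contains π σ ↔ ∃ f : Fin 6 → Fin n, f 0 < f 1 ∧ f 1 < f 2 ∧ f 2 < f 3 ∧ f 3 < f 4 ∧ f 4 < f 5 ∧
      π (f (w 0)) < π (f (w 1)) ∧ π (f (w 1)) < π (f (w 2)) ∧ π (f (w 2)) < π (f (w 3)) ∧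
      π (f (w 3)) < π (f (w 4)) ∧ π (f (w 4)) < π (f (w 5)) := by
  constructor
  · rintro ⟨f, hf, h⟩
    refine ⟨f, hf (by decide), hf (by decide), hf (by decide), hf (by decide), hf (by decide),
      ?_, ?_, ?_, ?_, ?_⟩ <;>
      rw [← h, hw, hw] <;> decide
  · rintro ⟨f, h1, h2, h3, h4, h5, g1, g2, g3, g4, g5⟩
    have hm : StrictMono (fun i => π (f (w i))) := by
      rw [Fin.strictMono_iff_lt_succ]
      intro i
      fin_cases i
      · exact g1
      · exact g2
      · exact g3
      · exact g4
      · exact g5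
    refine ⟨f, ?_, ?_⟩
    · rw [Fin.strictMono_iff_lt_succ]
      intro i
      fin_cases i
      · exact h1
      · exact h2
      · exact h3
      · exact h4
      · exact h5
    · intro a b
      have hw' : ∀ a, w (σ a) = a := fun a => σ.injective (hw _)
      have := hm.lt_iff_lt (a := σ a) (b := σ b)
      simp only [hw'] at this
      exact this.symm

theorem c2143 {n : ℕ} (π : Equiv.Perm (Fin n)) : Contains π p2143 ↔ ∃ i j k m, i < j ∧ j < k ∧
    k < m ∧ π j < π i ∧ π i < π m ∧ π m < π k := by
  rw [contains4 π p2143 ![1, 0, 3, 2] (by intro i; fin_cases i <;> rfl)]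
  constructor
  · rintro ⟨f, h⟩
    exact ⟨f 0, f 1, f 2, f 3, h⟩
  · rintro ⟨i, j, k, m, h⟩
    exact ⟨![i, j, k, m], h⟩

theorem c3142 {n : ℕ} (π : Equiv.Perm (Fin n)) : Contains π p3142 ↔ ∃ i j k m, i < j ∧ j < k ∧
    k < m ∧ π j < π m ∧ π m < π i ∧ π i < π k := by
  rw [contains4 π p3142 ![1, 3, 0, 2] (by intro i; fin_cases i <;> rfl)]
  constructor
  · rintro ⟨f, h⟩
    exact ⟨f 0, f 1, f 2, f 3, h⟩
  · rintro ⟨i, j, k, m, h⟩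
    exact ⟨![i, j, k, m], h⟩

theorem c2413 {n : ℕ} (π : Equiv.Perm (Fin n)) : Contains π p2413 ↔ ∃ i j k m, i < j ∧ j < k ∧
    k < m ∧ π k < π i ∧ π i < π m ∧ π m < π j := by
  rw [contains4 π p2413 ![2, 0, 3, 1] (by intro i; fin_cases i <;> rfl)]
  constructor
  · rintro ⟨f, h⟩
    exact ⟨f 0, f 1, f 2, f 3, h⟩
  · rintro ⟨i, j, k, m, h⟩
    exact ⟨![i, j, k, m], h⟩

theorem c246135 {n : ℕ} (π : Equiv.Perm (Fin n)) : Contains π p246135 ↔ ∃ i j k m o q, i < j ∧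
    j < k ∧ k < m ∧ m < o ∧ o < q ∧ π m < π i ∧ π i < π o ∧ π o < π j ∧ π j < π q ∧ π q < π k := by
  rw [contains6 π p246135 ![3, 0, 4, 1, 5, 2] (by intro i; fin_cases i <;> rfl)]
  constructor
  · rintro ⟨f, h⟩
    exact ⟨f 0, f 1, f 2, f 3, f 4, f 5, h⟩
  · rintro ⟨i, j, k, m, o, q, h⟩
    exact ⟨![i, j, k, m, o, q], h⟩

/-- chains of `Bef` give positions -/
theorem chain_next {n : ℕ} {π : Equiv.Perm (Fin n)} {j : Fin n} {c : ℕ}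
    (h : Bef (word π) (π j) c) : ∃ k, j < k ∧ (π k : ℕ) = c := by
  obtain ⟨j', k, hjk, h1, h2⟩ := (bef_word _ _ _).1 h
  obtain rfl : j' = j := π.injective (Fin.ext h1)
  exact ⟨k, hjk, h2⟩

theorem pa_word {n : ℕ} (π : Equiv.Perm (Fin n)) :
    PA (word π) ↔ (Avoids π p2143 ∧ Avoids π p3142 ∧ Avoids π p246135) := by
  unfold Avoids
  rw [c2143, c3142, c246135]
  constructor
  · rintro ⟨h4, h6⟩
    refine ⟨?_, ?_, ?_⟩
    · rintro ⟨i, j, k, m, h1, h2, h3, g1, g2, g3⟩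
      exact h4 _ _ _ _ (bef_word' h1) (bef_word' h2) (bef_word' h3) g1 (g1.trans g2) (g2.trans g3) g3
    · rintro ⟨i, j, k, m, h1, h2, h3, g1, g2, g3⟩
      exact h4 _ _ _ _ (bef_word' h1) (bef_word' h2) (bef_word' h3) (g1.trans g2) g1 g3 (g2.trans g3)
    · rintro ⟨i, j, k, m, o, q, h1, h2, h3, h4, h5, g1, g2, g3, g4, g5⟩
      exact h6 _ _ _ _ _ _ (bef_word' h1) (bef_word' h2) (bef_word' h3) (bef_word' h4)
        (bef_word' h5) g1 g2 g3 g4 g5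
  · rintro ⟨h1, h2, h3⟩
    constructor
    · intro a b c d k1 k2 k3 g1 g2 g3 g4
      obtain ⟨i, j, hij, rfl, rfl⟩ := (bef_word _ _ _).1 k1
      obtain ⟨k, hk, rfl⟩ := chain_next k2
      obtain ⟨m, hm, rfl⟩ := chain_next k3
      have hne : π i ≠ π m := fun h => by
        have := π.injective h
        omega
      rcases lt_or_gt_of_ne hne with h | h
      · exact h1 ⟨i, j, k, m, hij, hk, hm, g1, h, g4⟩
      · exact h2 ⟨i, j, k, m, hij, hk, hm, g2, h, g3⟩
    · intro a b c d e f k1 k2 k3 k4 k5 g1 g2 g3 g4 g5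
      obtain ⟨i, j, hij, rfl, rfl⟩ := (bef_word _ _ _).1 k1
      obtain ⟨k, hk, rfl⟩ := chain_next k2
      obtain ⟨m, hm, rfl⟩ := chain_next k3
      obtain ⟨o, ho, rfl⟩ := chain_next k4
      obtain ⟨q, hq, rfl⟩ := chain_next k5
      exact h3 ⟨i, j, k, m, o, q, hij, hk, hm, ho, hq, g1, g2, g3, g4, g5⟩

theorem sep_word {n : ℕ} (π : Equiv.Perm (Fin n)) :
    SEP (word π) ↔ (Avoids π p2413 ∧ Avoids π p3142) := by
  unfold Avoids
  rw [c2413, c3142]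
  constructor
  · intro hs
    refine ⟨?_, ?_⟩
    · rintro ⟨i, j, k, m, h1, h2, h3, g1, g2, g3⟩
      exact (hs _ _ _ _ (bef_word' h1) (bef_word' h2) (bef_word' h3)).1 ⟨g1, g2, g3⟩
    · rintro ⟨i, j, k, m, h1, h2, h3, g1, g2, g3⟩
      exact (hs _ _ _ _ (bef_word' h1) (bef_word' h2) (bef_word' h3)).2 ⟨g1, g2, g3⟩
  · rintro ⟨h1, h2⟩ a b c d k1 k2 k3
    obtain ⟨i, j, hij, rfl, rfl⟩ := (bef_word _ _ _).1 k1
    obtain ⟨k, hk, rfl⟩ := chain_next k2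
    obtain ⟨m, hm, rfl⟩ := chain_next k3
    exact ⟨fun g => h1 ⟨i, j, k, m, hij, hk, hm, g⟩, fun g => h2 ⟨i, j, k, m, hij, hk, hm, g⟩⟩

theorem card_word {n : ℕ} (P : List ℕ → Prop) (Q : Equiv.Perm (Fin n) → Prop)
    (h : ∀ π, P (word π) ↔ Q π) : Nat.card {π // Q π} = (Ls P 0 n).ncard := by
  rw [← Nat.card_coe_set_eq]
  refine Nat.card_eq_of_bijective
    (fun π : {π // Q π} => (⟨word π.1, word_perm π.1, (h π.1).2 π.2⟩ : Ls P 0 n)) ⟨?_, ?_⟩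
  · rintro ⟨π, hπ⟩ ⟨τ, hτ⟩ e
    have e1 : word π = word τ := congrArg Subtype.val e
    have e2 := List.ofFn_injective e1
    refine Subtype.ext (Equiv.ext fun i => Fin.ext ?_)
    exact congrFun e2 i
  · rintro ⟨l, hl1, hl2⟩
    obtain ⟨π, rfl⟩ := word_surj hl1
    exact ⟨⟨π, (h π).1 hl2⟩, rfl⟩

end WilfProof

theorem wilf_equiv_2143_3142_246135_and_2413_3142 (n : ℕ) :
    Nat.card {π : Equiv.Perm (Fin n) //
        Avoids π p2143 ∧ Avoids π p3142 ∧ Avoids π p246135} =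
      Nat.card {π : Equiv.Perm (Fin n) // Avoids π p2413 ∧ Avoids π p3142} := by
  rw [WilfProof.card_word WilfProof.PA _ WilfProof.pa_word,
    WilfProof.card_word WilfProof.SEP _ WilfProof.sep_word]
  exact WilfProof.cf_eq_cb n
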